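/- arXiv:0912.2152 — 2 statements merged into one kernel-verified Lean document; each statement's English description precedes it below -/
import Mathlib

section
/- Let k be a field, d an odd integer with d ≥ 3, and m an integer with d+1 < m; set a = (d+1)/2, R = k[x_1,…,x_m], and M = R/(I_{a,2,m−1} + x_1x_m·I_{a−1,3,m−2}) (the Stanley–Reisner ring k[Δ(d,m)]). Then b_0(M) = 1, b_{m−d}(M) = 1, b_i(M) = 0 for i > m−d, and for every i with 1 ≤ i ≤ m−d−1, b_i(M) = η(d, m, i) + η(d, m, m−d−i). -/
/-- The variable `x_t` (1-indexed, for `1 ≤ t ≤ n`) of the polynomial ring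
`k[x_1, …, x_n]`, realized as `MvPolynomial (Fin n) k`. -/
noncomputable def Xv (k : Type*) [Field k] (n t : ℕ) : MvPolynomial (Fin n) k :=
  if h : 1 ≤ t ∧ t ≤ n then MvPolynomial.X ⟨t - 1, by omega⟩ else 0

/-- The ideal `I_{a,p,q}` of `k[x_1, …, x_n]`, generated by the squarefree monomials
`x_{t_1} ⋯ x_{t_a}` with `p ≤ t_1 < t_2 < ⋯ < t_a ≤ q` and `t_{j+1} ≥ t_j + 2`. -/
noncomputable def idealI (k : Type*) [Field k] (n a p q : ℕ) :
    Ideal (MvPolynomial (Fin n) k) :=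
  Ideal.span { f | ∃ t : ℕ → ℕ, p ≤ t 0 ∧ t (a - 1) ≤ q ∧
    (∀ j, j + 1 < a → t j + 2 ≤ t (j + 1)) ∧
    f = ∏ j ∈ Finset.range a, Xv k n (t j) }

open CategoryTheory

set_option synthInstance.maxHeartbeats 1000000
set_option maxHeartbeats 1000000

/-- The maximal homogeneous ideal `(x_1, …, x_n)` of `k[x_1, …, x_n]`. -/
noncomputable def maxIdl (k : Type) [Field k] (n : ℕ) : Ideal (MvPolynomial (Fin n) k) :=
  Ideal.span (Set.range MvPolynomial.X)

/-- The `i`-th (total) Betti number of a module `M` over `R = k[x_1, …, x_n]`, as a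
cardinal: the dimension over `k` of `Tor_i^R(R/(x_1,…,x_n), M)`, where
`R/(x_1,…,x_n)` is `k` regarded as an `R`-module via evaluation of every variable at `0`. -/
noncomputable def betti (k : Type) [Field k] (n : ℕ)
    (M : ModuleCat (MvPolynomial (Fin n) k)) (i : ℕ) : Cardinal :=
  Module.rank k (RestrictScalars k (MvPolynomial (Fin n) k)
    (((Tor (ModuleCat (MvPolynomial (Fin n) k)) i).obj
        (ModuleCat.of (MvPolynomial (Fin n) k)
          (MvPolynomial (Fin n) k ⧸ maxIdl k n))).obj M))

/-- `η(e,n,j) = C(n−⌊e/2⌋−2, ⌊e/2⌋+j)·C(⌊e/2⌋+j−1, ⌊e/2⌋)` for `1 ≤ j ≤ n−e−1`, and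
`η(e,n,j) = 0` for `j = 0` or `j ≥ n−e`. -/
def eta (e n j : ℕ) : ℕ :=
  if 1 ≤ j ∧ j ≤ n - e - 1 then
    Nat.choose (n - e / 2 - 2) (e / 2 + j) * Nat.choose (e / 2 + j - 1) (e / 2)
  else 0


namespace BC

abbrev Rg (k : Type) [Field k] (n : ℕ) := MvPolynomial (Fin n) k
abbrev Xk (k : Type) [Field k] (n : ℕ) := Rg k n ⧸ maxIdl k n

instance hasExtR (k : Type) [Field k] (n : ℕ) : HasExt.{0} (ModuleCat.{0} (Rg k n)) :=
  CategoryTheory.hasExt_of_enoughProjectives.{0} _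

section
variable {k : Type} [Field k] {n : ℕ}

variable (k n) in
def E (i : ℕ) (M : Type) [AddCommGroup M] [Module (Rg k n) M] : Type :=
  Abelian.Ext (ModuleCat.of (Rg k n) M) (ModuleCat.of (Rg k n) (Xk k n)) i

variable (k n) in
abbrev EX (i : ℕ) (M : Type) [AddCommGroup M] [Module (Rg k n) M] : Type :=
  Abelian.Ext (ModuleCat.of (Rg k n) M) (ModuleCat.of (Rg k n) (Xk k n)) i

variable {M N A B C : Type} [AddCommGroup M] [Module (Rg k n) M] [AddCommGroup N] [Module (Rg k n) N]
  [AddCommGroup A] [Module (Rg k n) A] [AddCommGroup B] [Module (Rg k n) B]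
  [AddCommGroup C] [Module (Rg k n) C]

noncomputable instance (i : ℕ) : AddCommGroup (E k n i M) :=
  inferInstanceAs (AddCommGroup (Abelian.Ext (ModuleCat.of (Rg k n) M) (ModuleCat.of (Rg k n) (Xk k n)) i))

noncomputable instance (i : ℕ) : Module (Rg k n) (E k n i M) :=
  inferInstanceAs (Module (Rg k n) (Abelian.Ext (ModuleCat.of (Rg k n) M) (ModuleCat.of (Rg k n) (Xk k n)) i))

noncomputable instance (i : ℕ) : Module k (E k n i M) :=
  Module.compHom _ (algebraMap k (Rg k n))

instance (i : ℕ) : IsScalarTower k (Rg k n) (E k n i M) :=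
  ⟨fun x y z => by
    change _ = algebraMap k (Rg k n) x • (y • z)
    rw [Algebra.smul_def, mul_smul]⟩

noncomputable def pull (i : ℕ) (f : M →ₗ[Rg k n] N) : E k n i N →ₗ[Rg k n] E k n i M where
  toFun e := (Abelian.Ext.mk₀ (ModuleCat.ofHom f)).comp e (zero_add i)
  map_add' x y := Abelian.Ext.comp_add _ _ _ _
  map_smul' r x := Abelian.Ext.comp_smul _ _ _ _

lemma pull_comp (i : ℕ) (f : M →ₗ[Rg k n] N) (g : N →ₗ[Rg k n] A) (e : E k n i A) :
    pull i (g ∘ₗ f) e = pull i f (pull i g e) := by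
  exact (Abelian.Ext.mk₀_comp_mk₀_assoc (ModuleCat.ofHom f) (ModuleCat.ofHom g) (show EX k n i A from e)).symm

lemma pull_id (i : ℕ) (e : E k n i M) : pull i (LinearMap.id : M →ₗ[Rg k n] M) e = e := by
  change (Abelian.Ext.mk₀ (𝟙 _)).comp e (zero_add i) = e
  exact Abelian.Ext.mk₀_id_comp e

lemma smul_E (i : ℕ) (r : Rg k n) (hr : r ∈ maxIdl k n) (e : E k n i M) : r • e = 0 := by
  revert e
  change ∀ e : EX k n i M, r • e = 0
  intro e
  have h := Abelian.Ext.smul_eq_comp_mk₀ (R := Rg k n) (C := ModuleCat (Rg k n)) e r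
  refine h.trans ?_
  have : r • 𝟙 (ModuleCat.of (Rg k n) (Xk k n)) = 0 := by
    apply ModuleCat.hom_ext
    apply LinearMap.ext
    intro (x : Xk k n)
    obtain ⟨x, rfl⟩ := Submodule.Quotient.mk_surjective (maxIdl k n) x
    change r • (Submodule.Quotient.mk (p := maxIdl k n) x) = 0
    rw [← Submodule.Quotient.mk_smul, Submodule.Quotient.mk_eq_zero]
    exact Ideal.mul_mem_right _ _ hr
  rw [this, Abelian.Ext.mk₀_zero, Abelian.Ext.comp_zero]

lemma pull_smul (i : ℕ) (r : Rg k n) (f : M →ₗ[Rg k n] N) (e : E k n i N) :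
    pull i (r • f) e = r • pull i f e := by
  revert e
  change ∀ e : EX k n i N, (Abelian.Ext.mk₀ (r • ModuleCat.ofHom f)).comp e (zero_add i) =
    r • ((Abelian.Ext.mk₀ (ModuleCat.ofHom f)).comp e (zero_add i))
  intro e
  rw [Abelian.Ext.mk₀_smul, Abelian.Ext.smul_comp]

lemma pull_smul_eq_zero (i : ℕ) (r : Rg k n) (hr : r ∈ maxIdl k n) (f : M →ₗ[Rg k n] N) (e : E k n i N) :
    pull i (r • f) e = 0 := by
  rw [pull_smul, smul_E i r hr]

structure SE (f : A →ₗ[Rg k n] B) (g : B →ₗ[Rg k n] C) : Prop where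
  inj : Function.Injective f
  ex : Function.Exact f g
  surj : Function.Surjective g

lemma SE.zero {f : A →ₗ[Rg k n] B} {g : B →ₗ[Rg k n] C} (h : SE f g) :
    ModuleCat.ofHom f ≫ ModuleCat.ofHom g = 0 := by
  ext x
  exact h.ex.apply_apply_eq_zero x

lemma SE.se {f : A →ₗ[Rg k n] B} {g : B →ₗ[Rg k n] C} (h : SE f g) :
    (ShortComplex.mk (ModuleCat.ofHom f) (ModuleCat.ofHom g) h.zero).ShortExact where
  exact := by
    rw [ShortComplex.moduleCat_exact_iff]
    intro x hx
    exact (h.ex x).1 hx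
  mono_f := (ModuleCat.mono_iff_injective _).2 h.inj
  epi_g := (ModuleCat.epi_iff_surjective _).2 h.surj

noncomputable def SE.δ {f : A →ₗ[Rg k n] B} {g : B →ₗ[Rg k n] C} (h : SE f g) (i : ℕ) :
    E k n i A →ₗ[Rg k n] E k n (i+1) C where
  toFun e := h.se.extClass.comp (show EX k n i A from e) (add_comm 1 i)
  map_add' x y := Abelian.Ext.comp_add _ _ _ _
  map_smul' r x := Abelian.Ext.comp_smul _ _ _ _

section
variable {f : A →ₗ[Rg k n] B} {g : B →ₗ[Rg k n] C} (h : SE f g)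

lemma SE.exact1 (i : ℕ) : Function.Exact (pull i f) (h.δ i) := fun x =>
  ⟨fun hx => Abelian.Ext.contravariant_sequence_exact₁ h.se _ x (add_comm 1 i) hx, by
    rintro ⟨y, rfl⟩
    exact h.se.extClass_comp_assoc (Y := ModuleCat.of (Rg k n) (Xk k n)) y (h := add_comm 1 i)⟩

lemma SE.exact2 {f : A →ₗ[Rg k n] B} {g : B →ₗ[Rg k n] C} (h : SE f g) (i : ℕ) : Function.Exact (pull i g) (pull i f) := fun x =>
  ⟨fun hx => Abelian.Ext.contravariant_sequence_exact₂ h.se _ x hx, by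
    rintro ⟨y, rfl⟩
    rw [← pull_comp]
    have : g ∘ₗ f = (0 : Rg k n) • (g ∘ₗ f) := by
      ext x; simpa using h.ex.apply_apply_eq_zero x
    rw [this]
    exact pull_smul_eq_zero i 0 (zero_mem _) _ _⟩

lemma SE.exact3 (i : ℕ) : Function.Exact (h.δ i) (pull (i+1) g) := fun x =>
  ⟨fun hx => Abelian.Ext.contravariant_sequence_exact₃ h.se _ x hx (add_comm 1 i), by
    rintro ⟨y, rfl⟩
    exact h.se.comp_extClass_assoc (Y := ModuleCat.of (Rg k n) (Xk k n)) y (add_comm 1 i)⟩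

lemma SE.inj0 {f : A →ₗ[Rg k n] B} {g : B →ₗ[Rg k n] C} (h : SE f g) : Function.Injective (pull 0 g : E k n 0 C → E k n 0 B) := by
  have : Epi (ModuleCat.ofHom g) := h.se.epi_g
  exact Abelian.Ext.precomp_mk₀_injective_of_epi _ (ModuleCat.ofHom g)
end

lemma SE.nat {A' B' C' : Type} [AddCommGroup A'] [Module (Rg k n) A'] [AddCommGroup B'] [Module (Rg k n) B']
    [AddCommGroup C'] [Module (Rg k n) C']
    {f : A →ₗ[Rg k n] B} {g : B →ₗ[Rg k n] C} (h : SE f g)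
    {f' : A' →ₗ[Rg k n] B'} {g' : B' →ₗ[Rg k n] C'} (h' : SE f' g')
    (α : A →ₗ[Rg k n] A') (β : B →ₗ[Rg k n] B') (γ : C →ₗ[Rg k n] C')
    (h1 : β ∘ₗ f = f' ∘ₗ α) (h2 : γ ∘ₗ g = g' ∘ₗ β) (i : ℕ) (e : E k n i A') :
    h.δ i (pull i α e) = pull (i+1) γ (h'.δ i e) := by
  let F : ShortComplex.mk (ModuleCat.ofHom f) (ModuleCat.ofHom g) h.zero ⟶
    ShortComplex.mk (ModuleCat.ofHom f') (ModuleCat.ofHom g') h'.zero :=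
    { τ₁ := ModuleCat.ofHom α
      τ₂ := ModuleCat.ofHom β
      τ₃ := ModuleCat.ofHom γ
      comm₁₂ := by
        dsimp
        rw [← ModuleCat.ofHom_comp, ← ModuleCat.ofHom_comp, h1]
      comm₂₃ := by
        dsimp
        rw [← ModuleCat.ofHom_comp, ← ModuleCat.ofHom_comp, h2] }
  have := ShortComplex.ShortExact.extClass_naturality h.se h'.se F
  revert e
  change ∀ e : EX k n i A', h.se.extClass.comp ((Abelian.Ext.mk₀ F.τ₁).comp e (zero_add i)) (add_comm 1 i) =
    (Abelian.Ext.mk₀ F.τ₃).comp (h'.se.extClass.comp e (add_comm 1 i)) (zero_add (i+1))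
  intro e
  rw [← Abelian.Ext.comp_assoc (a₁₂ := 1) _ _ _ (by lia) (by lia) (by lia), this,
    ← Abelian.Ext.comp_assoc (a₁₂ := 1) _ _ _ (by lia) (by lia) (by lia)]

lemma E_free_succ (i : ℕ) (e : E k n (i+1) (Rg k n)) : e = 0 := by
  have : Projective (ModuleCat.of (Rg k n) (Rg k n)) := by
    infer_instance
  exact Abelian.Ext.eq_zero_of_projective e

noncomputable def E0equiv : E k n 0 M ≃ₗ[Rg k n] (M →ₗ[Rg k n] Xk k n) :=
  (Abelian.Ext.linearEquiv₀ (R := Rg k n) (X := ModuleCat.of (Rg k n) M) (Y := ModuleCat.of (Rg k n) (Xk k n))).trans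
    ModuleCat.homLinearEquiv

lemma pull0 (φ : M →ₗ[Rg k n] Xk k n) :
    pull 0 φ (E0equiv.symm LinearMap.id) = E0equiv.symm φ := by
  change (Abelian.Ext.mk₀ (ModuleCat.ofHom φ)).comp (Abelian.Ext.mk₀ (𝟙 _)) (zero_add 0) =
    (Abelian.Ext.mk₀ (ModuleCat.ofHom φ))
  simp
end
end BC

namespace BC

section
variable {k : Type} [Field k] {n : ℕ}

lemma sub_const_mem (p : Rg k n) : p - MvPolynomial.C (MvPolynomial.constantCoeff p) ∈ maxIdl k n := by
  induction p using MvPolynomial.induction_on with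
  | C a => simp
  | add p q hp hq =>
    have : p + q - MvPolynomial.C (MvPolynomial.constantCoeff (p + q)) =
      (p - MvPolynomial.C (MvPolynomial.constantCoeff p)) + (q - MvPolynomial.C (MvPolynomial.constantCoeff q)) := by
      rw [map_add, map_add]; ring
    rw [this]; exact add_mem hp hq
  | mul_X p i hp =>
    simp only [map_mul, MvPolynomial.constantCoeff_X, mul_zero, map_zero, sub_zero]
    exact Ideal.mul_mem_left _ _ (Ideal.subset_span ⟨i, rfl⟩)

lemma X_mem (i : Fin n) : (MvPolynomial.X i : Rg k n) ∈ maxIdl k n := Ideal.subset_span ⟨i, rfl⟩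

lemma const_of_mem (p : Rg k n) (hp : p ∈ maxIdl k n) : MvPolynomial.constantCoeff p = 0 := by
  have : maxIdl k n ≤ RingHom.ker (MvPolynomial.constantCoeff : Rg k n →+* k) := by
    refine Ideal.span_le.2 ?_
    rintro _ ⟨i, rfl⟩
    simp
  exact this hp

lemma mem_maxIdl (p : Rg k n) : p ∈ maxIdl k n ↔ MvPolynomial.constantCoeff p = 0 := by
  refine ⟨const_of_mem p, fun h => ?_⟩
  have := sub_const_mem p
  rwa [h, map_zero, sub_zero] at this

lemma Xk_rep (x : Xk k n) : ∃ c : k, x = (MvPolynomial.C c : Rg k n) • (Submodule.Quotient.mk (p := maxIdl k n) (1 : Rg k n)) := by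
  obtain ⟨p, rfl⟩ := Submodule.Quotient.mk_surjective (maxIdl k n) x
  refine ⟨MvPolynomial.constantCoeff p, ?_⟩
  rw [← Submodule.Quotient.mk_smul, Submodule.Quotient.eq, smul_eq_mul, mul_one]
  exact sub_const_mem p

lemma smul_Xk (r : Rg k n) (hr : r ∈ maxIdl k n) (x : Xk k n) : r • x = 0 := by
  obtain ⟨x, rfl⟩ := Submodule.Quotient.mk_surjective (maxIdl k n) x
  rw [← Submodule.Quotient.mk_smul, Submodule.Quotient.mk_eq_zero]
  exact Ideal.mul_mem_right _ _ hr

variable {M N A B C : Type} [AddCommGroup M] [Module (Rg k n) M] [AddCommGroup N] [Module (Rg k n) N]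
  [AddCommGroup A] [Module (Rg k n) A] [AddCommGroup B] [Module (Rg k n) B]
  [AddCommGroup C] [Module (Rg k n) C]

lemma surj_of_ne (φ : M →ₗ[Rg k n] Xk k n) (h : φ ≠ 0) : Function.Surjective φ := by
  obtain ⟨a, ha⟩ : ∃ a, φ a ≠ 0 := by
    by_contra! h'
    exact h (LinearMap.ext h')
  obtain ⟨c, hc⟩ := Xk_rep (φ a)
  have hc0 : c ≠ 0 := by
    rintro rfl
    apply ha; rw [hc]; simp
  intro x
  obtain ⟨d, rfl⟩ := Xk_rep x
  refine ⟨(MvPolynomial.C (d / c) : Rg k n) • a, ?_⟩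
  rw [map_smul, hc, smul_smul, ← map_mul, div_mul_cancel₀ _ hc0]

/-- rank statement -/
def Hb (k : Type) [Field k] (n : ℕ) (i : ℕ) (M : Type) [AddCommGroup M] [Module (Rg k n) M] (r : ℕ) : Prop :=
  Module.rank k (E k n i M) = (r : Cardinal)

lemma rank_exact {U V W : Type} [AddCommGroup U] [Module k U] [AddCommGroup V] [Module k V]
    [AddCommGroup W] [Module k W] (f : U →ₗ[k] V) (g : V →ₗ[k] W) (hf : Function.Injective f)
    (h : Function.Exact f g) (hg : Function.Surjective g) :
    Module.rank k V = Module.rank k U + Module.rank k W := by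
  rw [LinearMap.rank_eq_of_surjective hg, add_comm]
  congr 1
  rw [h.linearMap_ker_eq]
  exact (LinearEquiv.ofInjective f hf).rank_eq.symm

lemma rank_exactR {i j l : ℕ} (f : E k n i A →ₗ[Rg k n] E k n j B) (g : E k n j B →ₗ[Rg k n] E k n l C)
    (hf : Function.Injective f)
    (h : Function.Exact f g) (hg : Function.Surjective g) :
    Module.rank k (E k n j B) = Module.rank k (E k n i A) + Module.rank k (E k n l C) :=
  rank_exact (f.restrictScalars k) (g.restrictScalars k) hf h hg

lemma Hb_zero {i : ℕ} : Hb k n i M 0 ↔ ∀ e : E k n i M, e = 0 := by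
  unfold Hb
  rw [Nat.cast_zero, rank_zero_iff]
  exact ⟨fun h e => Subsingleton.elim _ _, fun h => ⟨fun a b => by rw [h a, h b]⟩⟩

/-- linear part -/
noncomputable def LinS (i : ℕ) (M : Type) [AddCommGroup M] [Module (Rg k n) M] : Submodule (Rg k n) (E k n i M) :=
  ⨆ φ : M →ₗ[Rg k n] Xk k n, LinearMap.range (pull i φ)

def Lin (k : Type) [Field k] (n : ℕ) (i : ℕ) (M : Type) [AddCommGroup M] [Module (Rg k n) M] : Prop :=
  (LinS i M : Submodule (Rg k n) (E k n i M)) = ⊤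

lemma mem_LinS {i : ℕ} (φ : M →ₗ[Rg k n] Xk k n) (e : E k n i (Xk k n)) : pull i φ e ∈ LinS i M :=
  Submodule.mem_iSup_of_mem φ ⟨e, rfl⟩

lemma Lin_zero (M : Type) [AddCommGroup M] [Module (Rg k n) M] : Lin k n 0 M := by
  refine top_le_iff.1 fun e _ => ?_
  have := pull0 (E0equiv e)
  rw [LinearEquiv.symm_apply_apply] at this
  rw [← this]
  exact mem_LinS _ _

lemma Lin_of_Hb {i : ℕ} (h : Hb k n i M 0) : Lin k n i M := by
  refine top_le_iff.1 fun e _ => ?_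
  rw [Hb_zero.1 h e]; exact zero_mem _

def ExtP (f : A →ₗ[Rg k n] B) : Prop := ∀ φ : A →ₗ[Rg k n] Xk k n, ∃ ψ : B →ₗ[Rg k n] Xk k n, ψ ∘ₗ f = φ

lemma LinS_le_map (i : ℕ) (f : A →ₗ[Rg k n] B) (h : ExtP f) :
    LinS i A ≤ (LinS i B).map (pull i f) := by
  refine iSup_le fun φ => ?_
  rintro _ ⟨e, rfl⟩
  obtain ⟨ψ, rfl⟩ := h φ
  exact ⟨_, mem_LinS ψ e, (pull_comp i f ψ e).symm⟩

lemma map_LinS (i : ℕ) (f : A →ₗ[Rg k n] B) :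
    (LinS i B).map (pull i f) ≤ LinS i A := by
  rw [Submodule.map_le_iff_le_comap]
  refine iSup_le fun φ => ?_
  rintro _ ⟨e, rfl⟩
  rw [Submodule.mem_comap, ← pull_comp]
  exact mem_LinS _ _

lemma Lin.surj {i : ℕ} {f : A →ₗ[Rg k n] B} (h : ExtP f) (hA : Lin k n i A) :
    Function.Surjective (pull i f) := by
  intro e
  have : e ∈ LinS i A := by rw [hA]; trivial
  obtain ⟨e', _, h'⟩ := LinS_le_map i f h this
  exact ⟨e', h'⟩

lemma Lin.of_surj {i : ℕ} {g : B →ₗ[Rg k n] C} (h : Function.Surjective (pull i g)) (hC : Lin k n i C) :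
    Lin k n i B := by
  refine top_le_iff.1 fun e _ => ?_
  obtain ⟨e, rfl⟩ := h e
  exact map_LinS i g ⟨e, by rw [hC]; trivial, rfl⟩

lemma Lin.ext {i : ℕ} {f : A →ₗ[Rg k n] B} {g : B →ₗ[Rg k n] C} (h : SE f g) (hx : ExtP f)
    (hA : Lin k n i A) (hC : Lin k n i C) : Lin k n i B := by
  refine top_le_iff.1 fun e _ => ?_
  have : pull i f e ∈ LinS i A := by rw [hA]; trivial
  obtain ⟨e', he', h'⟩ := LinS_le_map i f hx this
  obtain ⟨c, hc⟩ := (h.exact2 i (e - e')).1 (by rw [map_sub, h', sub_self])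
  have : e = pull i g c + e' := by rw [hc]; abel
  rw [this]
  refine add_mem ?_ he'
  exact map_LinS i g ⟨c, by rw [hC]; trivial, rfl⟩

lemma SE.rank_ext_succ {f : A →ₗ[Rg k n] B} {g : B →ₗ[Rg k n] C} (h : SE f g) {i : ℕ}
    (h0 : Function.Surjective (pull i f)) (h1 : Function.Surjective (pull (i+1) f)) :
    Module.rank k (E k n (i+1) B) = Module.rank k (E k n (i+1) C) + Module.rank k (E k n (i+1) A) := by
  refine rank_exactR (pull (i+1) g) (pull (i+1) f) ?_ (h.exact2 _) h1
  refine (injective_iff_map_eq_zero _).2 fun x hx => ?_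
  obtain ⟨y, rfl⟩ := (h.exact3 i x).1 hx
  exact (h.exact1 i y).2 (h0 y)

lemma SE.rank_ext {f : A →ₗ[Rg k n] B} {g : B →ₗ[Rg k n] C} (h : SE f g) (hx : ExtP f)
    (hL : ∀ i, Lin k n i A) {r s : ℕ} {i : ℕ} (hA : Hb k n i A r) (hC : Hb k n i C s) :
    Hb k n i B (r + s) := by
  unfold Hb at *
  rw [Nat.cast_add, ← hA, ← hC, add_comm]
  cases i with
  | zero => exact rank_exactR (pull 0 g) (pull 0 f) h.inj0 (h.exact2 _) (Lin.surj hx (hL 0))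
  | succ i => exact h.rank_ext_succ (Lin.surj hx (hL i)) (Lin.surj hx (hL (i+1)))

/-- zero map lemma -/
lemma SE.zinj {f : A →ₗ[Rg k n] B} {g : B →ₗ[Rg k n] C} (h : SE f g) {x : Rg k n} (hx : x ∈ maxIdl k n)
    {f' : A →ₗ[Rg k n] B} (hf : f = x • f') (i : ℕ) : Function.Injective (h.δ i) := by
  refine (injective_iff_map_eq_zero _).2 fun e he => ?_
  obtain ⟨y, rfl⟩ := (h.exact1 i e).1 he
  rw [hf, pull_smul_eq_zero i x hx]

lemma SE.zsurj {f : A →ₗ[Rg k n] B} {g : B →ₗ[Rg k n] C} (h : SE f g) {x : Rg k n} (hx : x ∈ maxIdl k n)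
    {f' : A →ₗ[Rg k n] B} (hf : f = x • f') (i : ℕ) : Function.Surjective (pull i g) := by
  intro e
  exact (h.exact2 i e).1 (by rw [hf, pull_smul_eq_zero i x hx])

lemma SE.zrank {f : A →ₗ[Rg k n] B} {g : B →ₗ[Rg k n] C} (h : SE f g) {x : Rg k n} (hx : x ∈ maxIdl k n)
    {f' : A →ₗ[Rg k n] B} (hf : f = x • f') {i r s : ℕ} (hA : Hb k n i A r) (hB : Hb k n (i+1) B s) :
    Hb k n (i+1) C (r + s) := by
  unfold Hb at *
  rw [Nat.cast_add, ← hA, ← hB]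
  exact rank_exactR (h.δ i) (pull (i+1) g) (h.zinj hx hf i) (h.exact3 i) (h.zsurj hx hf _)

lemma SE.zrank0 {f : A →ₗ[Rg k n] B} {g : B →ₗ[Rg k n] C} (h : SE f g) {x : Rg k n} (hx : x ∈ maxIdl k n)
    {f' : A →ₗ[Rg k n] B} (hf : f = x • f') {s : ℕ} (hB : Hb k n 0 B s) :
    Hb k n 0 C s := by
  unfold Hb at *
  rw [← hB]
  exact (LinearEquiv.ofBijective ((pull 0 g).restrictScalars k) ⟨h.inj0, h.zsurj hx hf _⟩).rank_eq

/-- transport along equivalences -/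
lemma pull_bij (i : ℕ) (e : A ≃ₗ[Rg k n] B) : Function.Bijective (pull i e.toLinearMap) := by
  constructor
  · refine Function.LeftInverse.injective (g := pull i e.symm.toLinearMap) fun x => ?_
    rw [← pull_comp]
    convert pull_id i x
    ext; simp
  · refine Function.RightInverse.surjective (g := pull i e.symm.toLinearMap) fun x => ?_
    rw [← pull_comp]
    convert pull_id i x
    ext; simp

lemma Hb.equiv {i r : ℕ} (h : Hb k n i A r) (e : A ≃ₗ[Rg k n] B) : Hb k n i B r := by
  unfold Hb at *
  rw [← h]
  exact (LinearEquiv.ofBijective ((pull i e.toLinearMap).restrictScalars k) (pull_bij i e)).rank_eq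

lemma Lin.equiv {i : ℕ} (h : Lin k n i A) (e : A ≃ₗ[Rg k n] B) : Lin k n i B :=
  Lin.of_surj (pull_bij i e.symm).2 h

/-- free variable -/
def FreeVar (j : Fin n) (A : Type) [AddCommGroup A] [Module (Rg k n) A] : Prop :=
  ∃ τ : A →+ A, (∀ a, τ ((MvPolynomial.X j : Rg k n) • a) = a) ∧
    (∀ i, i ≠ j → ∀ a, τ ((MvPolynomial.X i : Rg k n) • a) = (MvPolynomial.X i : Rg k n) • τ a) ∧
    (∀ (c : k) a, τ ((MvPolynomial.C c : Rg k n) • a) = (MvPolynomial.C c : Rg k n) • τ a)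

section FV
variable {j : Fin n} {f : A →ₗ[Rg k n] A} {g : A →ₗ[Rg k n] C}

lemma fv_delta (h : SE f g) (hfx : f = (MvPolynomial.X j : Rg k n) • LinearMap.id)
    (hA : FreeVar j A (k := k)) (i : ℕ) (φ : A →ₗ[Rg k n] Xk k n) (e : E k n i (Xk k n)) :
    h.δ i (pull i φ e) ∈ LinS (i+1) C := by
  by_cases hφ : φ = 0
  · have : φ = (0 : Rg k n) • φ := by rw [hφ, zero_smul]
    rw [this, pull_smul_eq_zero i 0 (zero_mem _), map_zero]
    exact zero_mem _
  have hs := surj_of_ne φ hφ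
  obtain ⟨τ, t1, t2, t3⟩ := hA
  have hf : ∀ a, f a = (MvPolynomial.X j : Rg k n) • a := fun a => by rw [hfx]; rfl
  have hφf : ∀ a, φ (f a) = 0 := fun a => by rw [hf, map_smul, smul_Xk _ (X_mem j)]
  have hcl : ∀ (r : Rg k n) (a : A), φ a = 0 ∧ φ (τ a) = 0 → φ (r • a) = 0 ∧ φ (τ (r • a)) = 0 := by
    intro r
    induction r using MvPolynomial.induction_on with
    | C c =>
      rintro a ⟨h1, h2⟩
      rw [t3, map_smul, map_smul, h1, h2]; simp
    | add p q hp hq =>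
      intro a ha
      rw [add_smul, map_add, map_add, map_add, (hp a ha).1, (hp a ha).2, (hq a ha).1, (hq a ha).2]; simp
    | mul_X p i hp =>
      rintro a ⟨h1, h2⟩
      rw [mul_smul]
      apply hp
      refine ⟨by rw [map_smul, smul_Xk _ (X_mem i)], ?_⟩
      by_cases hi : i = j
      · subst hi; rw [t1, h1]
      · rw [t2 i hi, map_smul, smul_Xk _ (X_mem i)]
  let D : Submodule (Rg k n) A :=
    { carrier := {a | φ a = 0 ∧ φ (τ a) = 0}
      add_mem' := by
        rintro a b ⟨h1, h2⟩ ⟨h3, h4⟩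
        simp [h1, h2, h3, h4]
      zero_mem' := by simp
      smul_mem' := fun r a ha => hcl r a ha }
  let K := LinearMap.ker φ
  let f' : (A ⧸ K) →ₗ[Rg k n] (A ⧸ D) := K.mapQ D f (by
    intro a (ha : φ a = 0)
    refine ⟨hφf a, ?_⟩
    rw [hf, t1, ha])
  have hDK : D ≤ K := fun a ha => ha.1
  let g' : (A ⧸ D) →ₗ[Rg k n] (A ⧸ K) := D.mapQ K LinearMap.id hDK
  have h' : SE f' g' := by
    refine ⟨?_, ?_, ?_⟩
    · refine (injective_iff_map_eq_zero _).2 fun x hx => ?_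
      obtain ⟨a, rfl⟩ := K.mkQ_surjective x
      have : f a ∈ D := (Submodule.Quotient.mk_eq_zero D).1 hx
      have := this.2
      rw [hf, t1] at this
      exact (Submodule.Quotient.mk_eq_zero K).2 this
    · intro x
      constructor
      · intro hx
        obtain ⟨a, rfl⟩ := D.mkQ_surjective x
        have ha : φ a = 0 := (Submodule.Quotient.mk_eq_zero K).1 hx
        obtain ⟨b, hb⟩ := hs (φ (τ a))
        refine ⟨K.mkQ b, ?_⟩
        change (Submodule.Quotient.mk (f b) : A ⧸ D) = Submodule.Quotient.mk a
        rw [Submodule.Quotient.eq]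
        refine ⟨by rw [map_sub, hφf, ha, sub_zero], ?_⟩
        rw [map_sub, hf, t1, map_sub, hb, sub_self]
      · rintro ⟨y, rfl⟩
        obtain ⟨a, rfl⟩ := K.mkQ_surjective y
        exact (Submodule.Quotient.mk_eq_zero K).2 (hφf a)
    · intro x
      obtain ⟨a, rfl⟩ := K.mkQ_surjective x
      exact ⟨D.mkQ a, rfl⟩
  obtain ⟨γ, hγ⟩ : ∃ γ : C →ₗ[Rg k n] (A ⧸ K), γ ∘ₗ g = K.mkQ := by
    have hk : LinearMap.ker g ≤ LinearMap.ker K.mkQ := by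
      intro a ha
      obtain ⟨b, rfl⟩ := (h.ex a).1 ha
      rw [Submodule.ker_mkQ]
      exact hφf b
    refine ⟨((LinearMap.ker g).liftQ K.mkQ hk) ∘ₗ (g.quotKerEquivOfSurjective h.surj).symm.toLinearMap, ?_⟩
    ext a
    have : (g.quotKerEquivOfSurjective h.surj).symm (g a) = Submodule.Quotient.mk a := by
      rw [LinearEquiv.symm_apply_eq]; rfl
    simp [this]
  let φe := φ.quotKerEquivOfSurjective hs
  have e1 : φ = φe.toLinearMap ∘ₗ K.mkQ := by ext a; rfl
  have key := SE.nat h h' K.mkQ D.mkQ γ (by ext a; rfl) (by rw [hγ]; ext a; rfl) i (pull i φe.toLinearMap e)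
  rw [e1, pull_comp, key]
  obtain ⟨z, hz⟩ := (pull_bij (i+1) φe).2 (h'.δ i (pull i φe.toLinearMap e))
  rw [← hz, ← pull_comp]
  exact mem_LinS _ _

lemma fv_Lin (h : SE f g) (hfx : f = (MvPolynomial.X j : Rg k n) • LinearMap.id)
    (hA : FreeVar j A (k := k)) {i : ℕ} (h0 : Lin k n i A) (h1 : Lin k n (i+1) A) : Lin k n (i+1) C := by
  refine top_le_iff.1 fun e _ => ?_
  have hx : ∀ φ : A →ₗ[Rg k n] Xk k n, ∃ ψ : C →ₗ[Rg k n] Xk k n, ψ ∘ₗ g = φ := by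
    intro φ
    have hk : LinearMap.ker g ≤ LinearMap.ker φ := by
      intro a ha
      obtain ⟨b, rfl⟩ := (h.ex a).1 ha
      rw [LinearMap.mem_ker, hfx]
      change φ ((MvPolynomial.X j : Rg k n) • b) = 0
      rw [map_smul, smul_Xk _ (X_mem j)]
    refine ⟨((LinearMap.ker g).liftQ φ hk) ∘ₗ (g.quotKerEquivOfSurjective h.surj).symm.toLinearMap, ?_⟩
    ext a
    have : (g.quotKerEquivOfSurjective h.surj).symm (g a) = Submodule.Quotient.mk a := by
      rw [LinearEquiv.symm_apply_eq]; rfl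
    simp [this]
  have : pull (i+1) g e ∈ LinS (i+1) A := by rw [h1]; trivial
  obtain ⟨e', he', h'⟩ := LinS_le_map (i+1) g hx this
  obtain ⟨c, hc⟩ := (h.exact3 i (e - e')).1 (by rw [map_sub, h', sub_self])
  have : e = h.δ i c + e' := by rw [hc]; abel
  rw [this]
  refine add_mem ?_ he'
  have hle : LinS i A ≤ (LinS (i+1) C).comap (h.δ i) := by
    refine iSup_le fun φ => ?_
    rintro _ ⟨e, rfl⟩
    exact fv_delta h hfx hA i φ e
  exact hle (by rw [h0]; trivial)

end FV

lemma Hb_free_succ (i : ℕ) : Hb k n (i+1) (Rg k n) 0 := Hb_zero.2 (E_free_succ i)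

lemma Hb_free_zero : Hb k n 0 (Rg k n) 1 := by
  have e1 : E k n 0 (Rg k n) ≃ₗ[Rg k n] Xk k n := E0equiv.trans (LinearMap.ringLmapEquivSelf (Rg k n) (Rg k n) (Xk k n))
  have h2 : Module.rank k (E k n 0 (Rg k n)) = Module.rank k (Xk k n) :=
    (e1.restrictScalars k).rank_eq
  unfold Hb
  rw [h2, Nat.cast_one]
  let c : Rg k n →ₗ[k] k := (MvPolynomial.aeval (0 : Fin n → k) : Rg k n →ₐ[k] k).toLinearMap
  let L : Xk k n ≃ₗ[k] k := 
    { toFun := (Ideal.Quotient.lift (maxIdl k n) (MvPolynomial.constantCoeff : Rg k n →+* k) (fun a ha => const_of_mem a ha))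
      map_add' := map_add _
      map_smul' := by
        intro c x
        obtain ⟨p, rfl⟩ := Ideal.Quotient.mk_surjective x
        change Ideal.Quotient.lift (maxIdl k n) _ _ (Ideal.Quotient.mk _ (c • p)) = _
        simp only [Ideal.Quotient.lift_mk]
        simp [MvPolynomial.smul_eq_C_mul]
      invFun := fun c => Ideal.Quotient.mk _ (MvPolynomial.C c)
      left_inv := by
        intro x
        obtain ⟨p, rfl⟩ := Ideal.Quotient.mk_surjective x
        simp only [Ideal.Quotient.lift_mk]
        rw [eq_comm, Ideal.Quotient.eq]
        exact sub_const_mem p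
      right_inv := by
        intro c
        simp only [Ideal.Quotient.lift_mk]
        simp }
  rw [L.rank_eq, Module.rank_self]

end
end BC

namespace BC

section
variable {k : Type} [Field k] {n : ℕ}

abbrev UpS (n : ℕ) := UpperSet (Fin n →₀ ℕ)

/-- monomial ideal -/
noncomputable def mI (k : Type) [Field k] {n : ℕ} (U : UpS n) : Ideal (Rg k n) :=
  MvPolynomial.restrictSupportIdeal k (U : Set (Fin n →₀ ℕ)) U.upper

lemma mem_mI {U : UpS n} {p : Rg k n} : p ∈ mI k U ↔ ∀ u, MvPolynomial.coeff u p ≠ 0 → u ∈ U := by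
  change ((p.support : Set (Fin n →₀ ℕ)) ⊆ U) ↔ _
  simp only [Set.subset_def, Finset.mem_coe, MvPolynomial.mem_support_iff, SetLike.mem_coe]

lemma mono_mem {U : UpS n} {u : Fin n →₀ ℕ} (h : u ∈ U) (c : k) : MvPolynomial.monomial u c ∈ mI k U := by
  rw [mem_mI]
  intro v hv
  rw [MvPolynomial.coeff_monomial] at hv
  by_cases huv : u = v
  · rwa [← huv]
  · rw [if_neg huv] at hv; exact absurd rfl hv

lemma mem_of_supp {J : Ideal (Rg k n)} {p : Rg k n}
    (h : ∀ u, MvPolynomial.coeff u p ≠ 0 → (MvPolynomial.monomial u (1:k)) ∈ J) : p ∈ J := by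
  rw [p.as_sum]
  refine sum_mem fun u hu => ?_
  have : MvPolynomial.monomial u (MvPolynomial.coeff u p) =
    MvPolynomial.C (MvPolynomial.coeff u p) * MvPolynomial.monomial u (1:k) := by
    rw [MvPolynomial.C_mul_monomial, mul_one]
  rw [this]
  exact Ideal.mul_mem_left _ _ (h u (MvPolynomial.mem_support_iff.1 hu))

noncomputable abbrev NV (k : Type) [Field k] {n : ℕ} (U V : UpS n) : Submodule (Rg k n) (mI k U) :=
  Submodule.comap (mI k U).subtype (mI k V)

abbrev NM (k : Type) [Field k] {n : ℕ} (U V : UpS n) : Type := (mI k U) ⧸ NV k U V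

variable {U V U' V' U1 V1 U2 V2 U3 V3 : UpS n}

noncomputable def mk (V : UpS n) (p : mI k U) : NM k U V := Submodule.Quotient.mk p

lemma mk_surj (x : NM k U V) : ∃ p : mI k U, mk V p = x := Submodule.Quotient.mk_surjective _ x

lemma mk_zero_iff (p : mI k U) : mk V p = 0 ↔ (p : Rg k n) ∈ mI k V :=
  Submodule.Quotient.mk_eq_zero _

lemma mk_eq_iff (p q : mI k U) : mk V p = mk V q ↔ (p : Rg k n) - q ∈ mI k V :=
  Submodule.Quotient.eq _

lemma mul_mem_mI {e : Fin n →₀ ℕ} (h : ∀ u ∈ U, u + e ∈ U') {p : Rg k n} (hp : p ∈ mI k U) :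
    MvPolynomial.monomial e (1:k) * p ∈ mI k U' := by
  rw [mem_mI] at hp ⊢
  intro u hu
  rw [MvPolynomial.coeff_monomial_mul'] at hu
  by_cases he : e ≤ u
  · rw [if_pos he, one_mul] at hu
    have := h _ (hp _ hu)
    rwa [tsub_add_cancel_of_le he] at this
  · rw [if_neg he] at hu; exact absurd rfl hu

lemma mul_mem_mI2 {e : Fin n →₀ ℕ} (h : ∀ u ∈ U, u ∈ V → u + e ∈ V') {p : Rg k n} (hp : p ∈ mI k U) (hp' : p ∈ mI k V) :
    MvPolynomial.monomial e (1:k) * p ∈ mI k V' := by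
  refine mul_mem_mI (U := U ⊔ V) (fun u hu => h u hu.1 hu.2) ?_
  rw [mem_mI] at *
  exact fun u hu => ⟨hp u hu, hp' u hu⟩

/-- multiplication map -/
noncomputable def mulMap (e : Fin n →₀ ℕ) (h1 : ∀ u ∈ U, u + e ∈ U') (h2 : ∀ u ∈ U, u ∈ V → u + e ∈ V') :
    NM k U V →ₗ[Rg k n] NM k U' V' :=
  (NV k U V).mapQ (NV k U' V')
    (((LinearMap.mulLeft (Rg k n) (MvPolynomial.monomial e (1:k))) ∘ₗ (mI k U).subtype).codRestrict (mI k U')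
      (fun p => mul_mem_mI h1 p.2))
    (fun p hp => mul_mem_mI2 h2 p.2 hp)

lemma mulMap_mk {e : Fin n →₀ ℕ} (h1 : ∀ u ∈ U, u + e ∈ U') (h2 : ∀ u ∈ U, u ∈ V → u + e ∈ V') (p : mI k U) :
    mulMap (k := k) e h1 h2 (mk V p) = mk V' ⟨MvPolynomial.monomial e (1:k) * (p : Rg k n), mul_mem_mI h1 p.2⟩ := rfl

lemma mulMap_inj {e : Fin n →₀ ℕ} (h1 : ∀ u ∈ U, u + e ∈ U') (h2 : ∀ u ∈ U, u ∈ V → u + e ∈ V')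
    (h : ∀ u ∈ U, u + e ∈ V' → u ∈ V) : Function.Injective (mulMap (k := k) e h1 h2) := by
  refine (injective_iff_map_eq_zero _).2 fun x hx => ?_
  obtain ⟨p, rfl⟩ := mk_surj x
  rw [mulMap_mk, mk_zero_iff, mem_mI] at hx
  rw [mk_zero_iff, mem_mI]
  intro u hu
  refine h u (mem_mI.1 p.2 u hu) (hx _ ?_)
  dsimp only
  rwa [add_comm, MvPolynomial.coeff_monomial_mul, one_mul]

lemma mem_J {e : Fin n →₀ ℕ} {p : Rg k n}
    (h : ∀ u, MvPolynomial.coeff u p ≠ 0 → u ∈ V ∨ ∃ w ∈ U, u = w + e) :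
    ∃ q ∈ mI k U, MvPolynomial.monomial e (1:k) * q - p ∈ mI k V := by
  have : p ∈ mI k V ⊔ Ideal.span {MvPolynomial.monomial e (1:k)} * mI k U := by
    apply mem_of_supp
    intro u hu
    rcases h u hu with h | ⟨w, hw, rfl⟩
    · exact Ideal.mem_sup_left (mono_mem h 1)
    · refine Ideal.mem_sup_right ?_
      rw [Ideal.mem_span_singleton_mul]
      refine ⟨_, mono_mem hw 1, ?_⟩
      rw [MvPolynomial.monomial_mul, one_mul, add_comm]
  obtain ⟨a, ha, b, hb, rfl⟩ := Submodule.mem_sup.1 this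
  obtain ⟨q, hq, rfl⟩ := Ideal.mem_span_singleton_mul.1 hb
  refine ⟨q, hq, ?_⟩
  rw [sub_add_cancel_right]
  exact neg_mem ha

lemma mulMap_surj {e : Fin n →₀ ℕ} (h1 : ∀ u ∈ U, u + e ∈ U') (h2 : ∀ u ∈ U, u ∈ V → u + e ∈ V')
    (h : ∀ u ∈ U', u ∈ V' ∨ ∃ w ∈ U, u = w + e) : Function.Surjective (mulMap (k := k) e h1 h2) := by
  intro x
  obtain ⟨p, rfl⟩ := mk_surj x
  obtain ⟨q, hq, hqp⟩ := mem_J (V := V') (U := U) (e := e) (p := (p : Rg k n)) (fun u hu => h u (mem_mI.1 p.2 u hu))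
  refine ⟨mk V ⟨q, hq⟩, ?_⟩
  rw [mulMap_mk, mk_eq_iff]
  exact hqp

lemma mulMap_exact {e1 e2 : Fin n →₀ ℕ} (h1 : ∀ u ∈ U1, u + e1 ∈ U2) (h2 : ∀ u ∈ U1, u ∈ V1 → u + e1 ∈ V2)
    (h3 : ∀ u ∈ U2, u + e2 ∈ U3) (h4 : ∀ u ∈ U2, u ∈ V2 → u + e2 ∈ V3)
    (h5 : ∀ u ∈ U1, u + e1 + e2 ∈ V3)
    (h : ∀ u ∈ U2, u + e2 ∈ V3 → u ∈ V2 ∨ ∃ w ∈ U1, u = w + e1) :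
    Function.Exact (mulMap (k := k) (V := V1) e1 h1 h2) (mulMap (k := k) e2 h3 h4) := by
  intro x
  constructor
  · intro hx
    obtain ⟨p, rfl⟩ := mk_surj x
    rw [mulMap_mk, mk_zero_iff, mem_mI] at hx
    obtain ⟨q, hq, hqp⟩ := mem_J (V := V2) (U := U1) (e := e1) (p := (p : Rg k n)) (by
      intro u hu
      refine h u (mem_mI.1 p.2 u hu) (hx _ ?_)
      dsimp only
      rwa [add_comm, MvPolynomial.coeff_monomial_mul, one_mul])
    refine ⟨mk V1 ⟨q, hq⟩, ?_⟩
    rw [mulMap_mk, mk_eq_iff]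
    exact hqp
  · rintro ⟨y, rfl⟩
    obtain ⟨p, rfl⟩ := mk_surj y
    rw [mulMap_mk, mulMap_mk, mk_zero_iff]
    dsimp only
    rw [← mul_assoc, MvPolynomial.monomial_mul, one_mul]
    refine mul_mem_mI (U := U1) (fun u hu => ?_) p.2
    rw [add_comm e2, ← add_assoc]
    exact h5 u hu

lemma mulMap_SE {e1 e2 : Fin n →₀ ℕ} (h1 : ∀ u ∈ U1, u + e1 ∈ U2) (h2 : ∀ u ∈ U1, u ∈ V1 → u + e1 ∈ V2)
    (h3 : ∀ u ∈ U2, u + e2 ∈ U3) (h4 : ∀ u ∈ U2, u ∈ V2 → u + e2 ∈ V3)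
    (hi : ∀ u ∈ U1, u + e1 ∈ V2 → u ∈ V1)
    (h5 : ∀ u ∈ U1, u + e1 + e2 ∈ V3)
    (h : ∀ u ∈ U2, u + e2 ∈ V3 → u ∈ V2 ∨ ∃ w ∈ U1, u = w + e1)
    (hs : ∀ u ∈ U3, u ∈ V3 ∨ ∃ w ∈ U2, u = w + e2) :
    SE (mulMap (k := k) (V := V1) e1 h1 h2) (mulMap (k := k) e2 h3 h4) :=
  ⟨mulMap_inj h1 h2 hi, mulMap_exact h1 h2 h3 h4 h5 h, mulMap_surj h3 h4 hs⟩

noncomputable def mulEquiv {e : Fin n →₀ ℕ} (h1 : ∀ u ∈ U, u + e ∈ U') (h2 : ∀ u ∈ U, u ∈ V → u + e ∈ V')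
    (h3 : ∀ u ∈ U, u + e ∈ V' → u ∈ V) (h4 : ∀ u ∈ U', u ∈ V' ∨ ∃ w ∈ U, u = w + e) : NM k U V ≃ₗ[Rg k n] NM k U' V' :=
  LinearEquiv.ofBijective (mulMap e h1 h2) ⟨mulMap_inj h1 h2 h3, mulMap_surj h1 h2 h4⟩

lemma mulMap_smul {e : Fin n →₀ ℕ} (h1 : ∀ u ∈ U, u + e ∈ U') (h2 : ∀ u ∈ U, u ∈ V → u + e ∈ V')
    (h3 : ∀ u ∈ U, u + 0 ∈ U') (h4 : ∀ u ∈ U, u ∈ V → u + 0 ∈ V') :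
    mulMap (k := k) e h1 h2 = MvPolynomial.monomial e (1:k) • mulMap (k := k) 0 h3 h4 := by
  ext x
  change mk V' _ = mk V' _
  congr 1
  ext1
  change _ = MvPolynomial.monomial e (1:k) * (MvPolynomial.monomial 0 (1:k) * _)
  rw [← mul_assoc, MvPolynomial.monomial_mul, add_zero, one_mul]
  rfl

lemma mulMap_id {e : Fin n →₀ ℕ} (h1 : ∀ u ∈ U, u + e ∈ U) (h2 : ∀ u ∈ U, u ∈ V → u + e ∈ V) :
    mulMap (k := k) e h1 h2 = MvPolynomial.monomial e (1:k) • LinearMap.id := by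
  ext x
  rfl

lemma mulMap_comp {e1 e2 : Fin n →₀ ℕ} (h1 : ∀ u ∈ U1, u + e1 ∈ U2) (h2 : ∀ u ∈ U1, u ∈ V1 → u + e1 ∈ V2)
    (h3 : ∀ u ∈ U2, u + e2 ∈ U3) (h4 : ∀ u ∈ U2, u ∈ V2 → u + e2 ∈ V3)
    (h5 : ∀ u ∈ U1, u + (e1 + e2) ∈ U3) (h6 : ∀ u ∈ U1, u ∈ V1 → u + (e1 + e2) ∈ V3) :
    mulMap (k := k) e2 h3 h4 ∘ₗ mulMap (k := k) e1 h1 h2 = mulMap (k := k) (e1 + e2) h5 h6 := by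
  ext x
  change mk V3 _ = mk V3 _
  congr 1
  ext1
  change MvPolynomial.monomial e2 (1:k) * (MvPolynomial.monomial e1 (1:k) * _) = MvPolynomial.monomial (e1 + e2) (1:k) * _
  rw [← mul_assoc, MvPolynomial.monomial_mul, one_mul, add_comm]

lemma NM_zero (h : ∀ u ∈ U, u ∈ V) (i : ℕ) : Hb k n i (NM k U V) 0 := by
  rw [Hb_zero]
  intro e
  have : (LinearMap.id : NM k U V →ₗ[Rg k n] NM k U V) = (0 : Rg k n) • LinearMap.id := by
    ext x
    change mk V x = mk V _
    rw [mk_eq_iff]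
    refine sub_mem ?_ ?_
    · rw [mem_mI]
      exact fun u hu => h u (mem_mI.1 x.2 u hu)
    · simp
  rw [← pull_id i e, this, pull_smul_eq_zero i 0 (zero_mem _)]

noncomputable def topEquiv (V : UpS n) : (Rg k n ⧸ mI k V) ≃ₗ[Rg k n] NM k ⊥ V := by
  let f : Rg k n →ₗ[Rg k n] NM k (⊥ : UpS n) V :=
    (NV k ⊥ V).mkQ ∘ₗ LinearMap.codRestrict (mI k ⊥) LinearMap.id (fun p => mem_mI.2 fun u _ => UpperSet.mem_bot)
  have hk : mI k V = LinearMap.ker f := by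
    ext p
    rw [LinearMap.mem_ker]
    exact (mk_zero_iff (V := V) (U := ⊥) ⟨p, mem_mI.2 fun u _ => UpperSet.mem_bot⟩).symm
  have hs : Function.Surjective f := by
    intro x
    obtain ⟨p, rfl⟩ := mk_surj x
    exact ⟨p, rfl⟩
  exact (Submodule.quotEquivOfEq _ _ hk).trans (f.quotKerEquivOfSurjective hs)

lemma mI_bot (h : ∀ u, u ∉ V) : mI k V = ⊥ := by
  rw [eq_bot_iff]
  intro p hp
  rw [Submodule.mem_bot]
  ext u
  by_contra hu
  exact h u (mem_mI.1 hp u hu)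

noncomputable def freeEquiv (h : ∀ u, u ∉ V) : Rg k n ≃ₗ[Rg k n] NM k ⊥ V :=
  ((Submodule.quotEquivOfEqBot (mI k V) (mI_bot h)).symm).trans (topEquiv V)

lemma divX_mul (i j : Fin n) (hij : i ≠ j) (p : Rg k n) :
    (MvPolynomial.X i * p).divMonomial (Finsupp.single j 1) = MvPolynomial.X i * p.divMonomial (Finsupp.single j 1) := by
  ext u
  rw [MvPolynomial.coeff_divMonomial, MvPolynomial.coeff_X_mul', MvPolynomial.coeff_X_mul', MvPolynomial.coeff_divMonomial]
  have h1 : (Finsupp.single j 1 + u : Fin n →₀ ℕ) i = u i := by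
    rw [Finsupp.add_apply, Finsupp.single_eq_of_ne hij, zero_add]
  simp only [Finsupp.mem_support_iff, h1]
  split_ifs with h
  · congr 1
    ext l
    have h2 : (Finsupp.single i 1 : Fin n →₀ ℕ) l ≤ u l := by
      by_cases hl : i = l
      · subst hl; simp; omega
      · rw [Finsupp.single_eq_of_ne (Ne.symm hl)]; omega
    simp only [Finsupp.add_apply, Finsupp.tsub_apply]
    omega
  · rfl

lemma div_mem (j : Fin n) (h : ∀ u, u + Finsupp.single j 1 ∈ U → u ∈ U) {p : Rg k n} (hp : p ∈ mI k U) :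
    p.divMonomial (Finsupp.single j 1) ∈ mI k U := by
  rw [mem_mI] at *
  intro u hu
  rw [MvPolynomial.coeff_divMonomial] at hu
  apply h
  rw [add_comm]
  exact hp _ hu

lemma NM_freeVar (j : Fin n) (hU : ∀ u, u + Finsupp.single j 1 ∈ U → u ∈ U)
    (hV : ∀ u, u + Finsupp.single j 1 ∈ V → u ∈ V) : FreeVar (k := k) j (NM k U V) := by
  let t0 : mI k U →+ mI k U :=
    { toFun := fun p => ⟨(p : Rg k n).divMonomial (Finsupp.single j 1), div_mem j hU p.2⟩
      map_zero' := by ext1; exact MvPolynomial.zero_divMonomial _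
      map_add' := fun p q => by ext1; exact MvPolynomial.add_divMonomial _ _ _ }
  let t : NM k U V →+ NM k U V :=
    QuotientAddGroup.map (NV k U V).toAddSubgroup (NV k U V).toAddSubgroup t0 (fun p hp => div_mem j hV hp)
  have ht : ∀ p, t (mk V p) = mk V (t0 p) := fun p => rfl
  have hsm : ∀ (r : Rg k n) p, r • mk V p = mk (U := U) V (r • p) := fun r p => (Submodule.Quotient.mk_smul (NV k U V) r p).symm
  refine ⟨t, fun x => ?_, fun i hi x => ?_, fun c x => ?_⟩ <;> obtain ⟨p, rfl⟩ := mk_surj x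
  · rw [hsm, ht]
    congr 1
    ext1
    exact MvPolynomial.X_mul_divMonomial _ _
  · rw [hsm, ht, ht, hsm]
    congr 1
    ext1
    exact divX_mul _ _ hi _
  · rw [hsm, ht, ht, hsm]
    congr 1
    ext1
    change (MvPolynomial.C c * (p : Rg k n)).divMonomial _ = MvPolynomial.C c * (p : Rg k n).divMonomial _
    ext u
    rw [MvPolynomial.coeff_divMonomial, MvPolynomial.coeff_C_mul, MvPolynomial.coeff_C_mul, MvPolynomial.coeff_divMonomial]

/-- restriction of a polynomial to monomials in `U` -/
noncomputable def rho (U : UpS n) (p : Rg k n) : Rg k n := by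
  classical
  exact ∑ u ∈ p.support with u ∈ U, MvPolynomial.monomial u (MvPolynomial.coeff u p)

lemma rho_in {p : Rg k n} {u : Fin n →₀ ℕ} (h : u ∈ U) : MvPolynomial.coeff u (rho U p) = MvPolynomial.coeff u p := by
  classical
  unfold rho
  rw [MvPolynomial.coeff_sum]
  simp only [MvPolynomial.coeff_monomial]
  rw [Finset.sum_ite_eq']
  by_cases h' : MvPolynomial.coeff u p = 0
  · rw [h']; simp
  · rw [if_pos]; simp [h', h]

lemma rho_out {p : Rg k n} {u : Fin n →₀ ℕ} (h : u ∉ U) : MvPolynomial.coeff u (rho U p) = 0 := by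
  classical
  unfold rho
  rw [MvPolynomial.coeff_sum]
  simp only [MvPolynomial.coeff_monomial]
  rw [Finset.sum_ite_eq', if_neg]
  simp [h]

lemma rho_mem (p : Rg k n) : rho U p ∈ mI k U := by
  rw [mem_mI]
  intro u hu
  by_contra h
  exact hu (rho_out h)

lemma rho_memV {p : Rg k n} (hp : p ∈ mI k V) : rho U p ∈ mI k V := by
  rw [mem_mI] at *
  intro u hu
  by_cases h : u ∈ U
  · rw [rho_in h] at hu; exact hp u hu
  · exact absurd (rho_out h) hu

lemma rho_add (p q : Rg k n) : rho U (p + q) = rho U p + rho U q := by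
  ext u
  by_cases h : u ∈ U
  · simp [rho_in h]
  · simp [rho_out h]

lemma rho_C (c : k) (q : Rg k n) : rho U (MvPolynomial.C c * q) = MvPolynomial.C c * rho U q := by
  ext u
  by_cases h : u ∈ U
  · simp [rho_in h]
  · simp [rho_out h]

lemma rho_self {p : Rg k n} (hp : p ∈ mI k U) : rho U p = p := by
  ext u
  by_cases h : u ∈ U
  · simp [rho_in h]
  · rw [rho_out h]
    by_contra h'
    exact h (mem_mI.1 hp u (Ne.symm h'))

lemma NM_ext (a : ℕ) (h1 : ∀ u ∈ U, u + 0 ∈ U') (h2 : ∀ u ∈ U, u ∈ V → u + 0 ∈ V)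
    (hd : ∀ u ∈ U', a ≤ u.degree) (hd' : ∀ u ∈ U, a < u.degree → ∃ j, ∃ w ∈ U, u = w + Finsupp.single j 1) :
    ExtP (mulMap (k := k) (U := U) (U' := U') (V := V) (V' := V) 0 h1 h2) := by
  intro φ
  have hz : ∀ p : mI k U, (∀ u, MvPolynomial.coeff u (p : Rg k n) ≠ 0 → a < u.degree) → φ (mk V p) = 0 := by
    intro p hp
    have hmem : (p : Rg k n) ∈ Submodule.map (mI k U).subtype (LinearMap.ker (φ ∘ₗ (NV k U V).mkQ)) := by
      refine mem_of_supp (J := Submodule.map (mI k U).subtype (LinearMap.ker (φ ∘ₗ (NV k U V).mkQ))) ?_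
      intro u hu
      obtain ⟨j, w, hw, rfl⟩ := hd' u (mem_mI.1 p.2 u hu) (hp u hu)
      refine ⟨(MvPolynomial.X j : Rg k n) • ⟨MvPolynomial.monomial w 1, mono_mem hw 1⟩, ?_, ?_⟩
      · change (φ ∘ₗ (NV k U V).mkQ) _ = 0
        rw [map_smul, smul_Xk _ (X_mem j)]
      · change (MvPolynomial.X j : Rg k n) * MvPolynomial.monomial w 1 = _
        rw [MvPolynomial.X, MvPolynomial.monomial_mul, add_comm, one_mul]
    obtain ⟨q, hq, hqp⟩ := hmem
    have : q = p := Subtype.ext hqp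
    rw [← this]
    exact hq
  have hX : ∀ (i : Fin n) (p : mI k U'), φ (mk V ⟨rho U (MvPolynomial.X i * (p : Rg k n)), rho_mem _⟩) = 0 := by
    intro i p
    apply hz
    intro u hu
    have hu' : u ∈ U := by
      by_contra h
      exact hu (rho_out h)
    dsimp only at hu
    rw [rho_in hu', MvPolynomial.coeff_X_mul'] at hu
    split_ifs at hu with hi
    · have h3 := hd _ (mem_mI.1 p.2 _ hu)
      have h4 : u - Finsupp.single i 1 + Finsupp.single i 1 = u := by
        apply tsub_add_cancel_of_le
        rw [Finsupp.single_le_iff]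
        rw [Finsupp.mem_support_iff] at hi
        omega
      rw [← h4, map_add, Finsupp.degree_single]
      omega
    · exact absurd rfl hu
  let ψ0 : mI k U' →+ Xk k n :=
    { toFun := fun p => φ (mk V ⟨rho U (p : Rg k n), rho_mem _⟩)
      map_zero' := by
        rw [← map_zero φ]
        congr 1
      map_add' := fun p q => by
        rw [← map_add]
        congr 1
        change _ = mk V (_ + _)
        congr 1
        ext1
        exact rho_add _ _ }
  have hsm : ∀ (r : Rg k n) (p : mI k U'), ψ0 (r • p) = r • ψ0 p := by
    intro r
    induction r using MvPolynomial.induction_on with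
    | C c =>
      intro p
      change φ _ = _ • φ _
      rw [← map_smul]
      congr 1
      change _ = mk V (_ • _)
      congr 1
      ext1
      exact rho_C _ _
    | add p q hp hq =>
      intro a
      rw [add_smul, map_add, hp, hq, add_smul]
    | mul_X p i hp =>
      intro a
      have : ψ0 ((MvPolynomial.X i : Rg k n) • a) = 0 := hX i a
      rw [mul_smul, hp, this, mul_smul, smul_Xk _ (X_mem i)]
  let ψ1 : mI k U' →ₗ[Rg k n] Xk k n := { ψ0 with map_smul' := hsm }
  refine ⟨(NV k U' V).liftQ ψ1 ?_, ?_⟩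
  · intro p hp
    change φ _ = 0
    rw [← map_zero φ]
    congr 1
    rw [mk_zero_iff]
    exact rho_memV hp
  · ext p
    change φ (mk V _) = φ (mk V p)
    congr 2
    ext1
    change rho U (MvPolynomial.monomial 0 1 * (p : Rg k n)) = p
    have : (MvPolynomial.monomial 0 (1:k) : Rg k n) = 1 := rfl
    rw [this, one_mul, rho_self p.2]

end
end BC

namespace BC

/-- `S ∩ [p, r)` contains a subset of size `a` with gaps at least two -/
def P (S : ℕ → Prop) : ℕ → ℕ → ℕ → Prop
  | 0, _, _ => True
  | a+1, p, r => ∃ t, p ≤ t ∧ t < r ∧ S t ∧ P S a (t+2) r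

section
variable {S S' : ℕ → Prop}

lemma P_mp {a p p' r : ℕ} (hp : p' ≤ p) (h : P S a p r) : P S a p' r := by
  cases a with
  | zero => trivial
  | succ a =>
    obtain ⟨t, h1, h2, h3, h4⟩ := h
    exact ⟨t, by omega, h2, h3, h4⟩

lemma P_congr {a p r : ℕ} (hS : ∀ t, p ≤ t → t < r → S t → S' t) (h : P S a p r) : P S' a p r := by
  induction a generalizing p with
  | zero => trivial
  | succ a ih =>
    obtain ⟨t, h1, h2, h3, h4⟩ := h
    exact ⟨t, h1, h2, hS t h1 h2 h3, ih (fun s hs => hS s (by omega)) h4⟩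

lemma P_mr {a p r r' : ℕ} (hr : r ≤ r') (h : P S a p r) : P S a p r' := by
  induction a generalizing p with
  | zero => trivial
  | succ a ih =>
    obtain ⟨t, h1, h2, h3, h4⟩ := h
    exact ⟨t, h1, by omega, h3, ih h4⟩

lemma P_m {a p p' r r' : ℕ} (hp : p' ≤ p) (hr : r ≤ r') (h : P S a p r) : P S a p' r' := P_mp hp (P_mr hr h)

lemma P_left {a p r : ℕ} (h : P S (a+1) p r) : P S (a+1) (p+1) r ∨ (S p ∧ P S a (p+2) r) := by
  obtain ⟨t, h1, h2, h3, h4⟩ := h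
  rcases Nat.lt_or_ge p t with h | h
  · exact Or.inl ⟨t, h, h2, h3, h4⟩
  · obtain rfl : p = t := by omega
    exact Or.inr ⟨h3, h4⟩

lemma P_left_mk {a p r : ℕ} (h0 : p < r) (h1 : S p) (h : P S a (p+2) r) : P S (a+1) p r :=
  ⟨p, le_rfl, h0, h1, h⟩

lemma P_dl {a p r : ℕ} (h : P S (a+1) p r) : P S a (p+2) r := by
  obtain ⟨t, h1, h2, h3, h4⟩ := h
  exact P_mp (by omega) h4

lemma P_dr {a p r : ℕ} (h : P S (a+1) p (r+2)) : P S a p r := by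
  induction a generalizing p with
  | zero => trivial
  | succ a ih =>
    obtain ⟨t, h1, h2, h3, h4⟩ := h
    have h4' := h4
    obtain ⟨t', h1', h2', -⟩ := h4'
    exact ⟨t, h1, by omega, h3, ih h4⟩

lemma P_right {a p r : ℕ} (h : P S (a+1) p (r+2)) : P S (a+1) p (r+1) ∨ (S (r+1) ∧ P S a p r) := by
  induction a generalizing p with
  | zero =>
    obtain ⟨t, h1, h2, h3, h4⟩ := h
    rcases Nat.lt_or_ge t (r+1) with h | h
    · exact Or.inl ⟨t, h1, h, h3, trivial⟩
    · obtain rfl : t = r+1 := by omega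
      exact Or.inr ⟨h3, trivial⟩
  | succ a ih =>
    obtain ⟨t, h1, h2, h3, h4⟩ := h
    have h4' := h4
    obtain ⟨t', h1', h2', -⟩ := h4'
    rcases ih h4 with h | ⟨h, h'⟩
    · have h'' := h
      obtain ⟨t2, h12, h22, -⟩ := h''
      exact Or.inl ⟨t, h1, by omega, h3, h⟩
    · exact Or.inr ⟨h, t, h1, by omega, h3, h'⟩

lemma P_right_mk {a p r : ℕ} (h0 : p ≤ r+1) (h1 : S (r+1)) (h : P S a p r) : P S (a+1) p (r+2) := by
  induction a generalizing p with
  | zero => exact ⟨r+1, h0, by omega, h1, trivial⟩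
  | succ a ih =>
    obtain ⟨t, h1, h2, h3, h4⟩ := h
    exact ⟨t, h1, by omega, h3, ih (by omega) h4⟩

lemma P_len {a p r : ℕ} (h : P S (a+1) p r) : p + 2 * a + 1 ≤ r := by
  induction a generalizing p with
  | zero => obtain ⟨t, h1, h2, h3, h4⟩ := h; omega
  | succ a ih =>
    obtain ⟨t, h1, h2, h3, h4⟩ := h
    have := ih h4
    omega

lemma P_tight {a p r : ℕ} (hr : r ≤ p + 2 * a + 1) (h : P S (a+1) p r) : ∀ j, j ≤ a → S (p + 2 * j) := by
  induction a generalizing p with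
  | zero =>
    obtain ⟨t, h1, h2, h3, h4⟩ := h
    intro j hj
    have : p + 2 * j = t := by omega
    rwa [this]
  | succ a ih =>
    have hh := h
    obtain ⟨t, h1, h2, h3, h4⟩ := h
    have := P_len h4
    obtain rfl : t = p := by omega
    intro j hj
    cases j with
    | zero => exact h3
    | succ j =>
      have := ih (by omega) h4 j (by omega)
      rwa [show t + 2 * (j+1) = t + 2 + 2 * j by ring]

lemma P_tight_mk {a p r : ℕ} (hr : p + 2 * a + 1 ≤ r) (h : ∀ j, j ≤ a → S (p + 2 * j)) : P S (a+1) p r := by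
  induction a generalizing p with
  | zero => exact ⟨p, le_rfl, by omega, h 0 le_rfl, trivial⟩
  | succ a ih =>
    refine ⟨p, le_rfl, by omega, h 0 (by omega), ih (by omega) fun j hj => ?_⟩
    have := h (j+1) (by omega)
    rwa [show p + 2 * (j+1) = p + 2 + 2 * j by ring] at this

lemma P_splice {b p r : ℕ} (h1 : P S (b+1) p (r+1)) (h2 : P S b (p+1) r) (hr : p + 2 * b + 1 ≤ r) :
    P S (b+1) (p+1) (r+1) ∨ P S (b+1) p r := by
  induction b generalizing p with
  | zero =>
    obtain ⟨t, h1, h2, h3, h4⟩ := h1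
    rcases Nat.lt_or_ge t r with h | h
    · exact Or.inr ⟨t, h1, h, h3, trivial⟩
    · exact Or.inl ⟨t, by omega, h2, h3, trivial⟩
  | succ b ih =>
    rcases P_left h1 with h | ⟨hp, h⟩
    · exact Or.inl h
    obtain ⟨t', ht1, ht2, ht3, ht4⟩ := h2
    rcases ih h (P_mp (by omega) ht4) (by omega) with h' | h'
    · rcases Nat.lt_or_ge (p+1) t' with h'' | h''
      · exact Or.inr (P_left_mk (by omega) hp ⟨t', by omega, ht2, ht3, ht4⟩)
      · obtain rfl : t' = p+1 := by omega
        exact Or.inl (P_left_mk (by omega) ht3 h')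
    · exact Or.inr (P_left_mk (by omega) hp h')

lemma P_seq {a p r : ℕ} : P S (a+1) p r ↔ ∃ t : ℕ → ℕ, p ≤ t 0 ∧ t a < r ∧ (∀ j, j < a → t j + 2 ≤ t (j+1)) ∧
    ∀ j, j ≤ a → S (t j) := by
  induction a generalizing p with
  | zero =>
    constructor
    · rintro ⟨t, h1, h2, h3, -⟩
      exact ⟨fun _ => t, h1, h2, fun j hj => by omega, fun j _ => h3⟩
    · rintro ⟨t, h1, h2, -, h3⟩
      exact ⟨t 0, h1, h2, h3 0 le_rfl, trivial⟩
  | succ a ih =>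
    constructor
    · rintro ⟨t, h1, h2, h3, h4⟩
      obtain ⟨u, h5, h6, h7, h8⟩ := ih.1 h4
      refine ⟨fun j => if j = 0 then t else u (j-1), by simpa using h1, by simpa using h6, ?_, ?_⟩
      · intro j hj
        cases j with
        | zero => simpa using h5
        | succ j => simpa using h7 j (by omega)
      · intro j hj
        cases j with
        | zero => simpa using h3
        | succ j => simpa using h8 j (by omega)
    · rintro ⟨t, h1, h2, h3, h4⟩
      have hm : ∀ j, j ≤ a + 1 → t 0 ≤ t j := by
        intro j hj
        induction j with
        | zero => exact le_rfl
        | succ j ihj =>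
          have := ihj (by omega)
          have := h3 j (by omega)
          omega
      refine ⟨t 0, h1, ?_, h4 0 (by omega), ih.2 ⟨fun j => t (j+1), h3 0 (by omega), h2, ?_, ?_⟩⟩
      · have := hm (a+1) le_rfl
        omega
      · exact fun j hj => h3 (j+1) (by omega)
      · exact fun j hj => h4 (j+1) (by omega)
end

section
variable {n : ℕ}

def Su (u : Fin n →₀ ℕ) (t : ℕ) : Prop := ∃ h : t < n, u ⟨t, h⟩ ≠ 0

noncomputable def sv (n t : ℕ) : Fin n →₀ ℕ := if h : t < n then Finsupp.single ⟨t, h⟩ 1 else 0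

lemma Su_mono {u v : Fin n →₀ ℕ} (h : u ≤ v) (t : ℕ) (ht : Su u t) : Su v t := by
  obtain ⟨h1, h2⟩ := ht
  refine ⟨h1, ?_⟩
  have := h ⟨t, h1⟩
  omega

lemma sv_apply (t : ℕ) (i : Fin n) : sv n t i = if t = i then 1 else 0 := by
  unfold sv
  split_ifs with h1 h2 h2
  · have : i = ⟨t, h1⟩ := Fin.ext h2.symm
    rw [this, Finsupp.single_eq_same]
  · rw [Finsupp.single_eq_of_ne]
    rintro rfl
    exact h2 rfl
  · exact absurd (h2 ▸ i.2) h1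
  · rfl

lemma Su_add (u : Fin n →₀ ℕ) (t s : ℕ) (hst : s ≠ t) : Su (u + sv n t) s ↔ Su u s := by
  unfold Su
  refine exists_congr fun h => ?_
  rw [Finsupp.add_apply, sv_apply, if_neg (by intro h'; exact hst h'.symm), add_zero]

lemma Su_self (u : Fin n →₀ ℕ) {t : ℕ} (ht : t < n) : Su (u + sv n t) t := by
  refine ⟨ht, ?_⟩
  rw [Finsupp.add_apply, sv_apply, if_pos rfl]
  omega

lemma Su_sub {u : Fin n →₀ ℕ} {t : ℕ} (h : Su u t) :
    ∃ w, u = w + sv n t ∧ ∀ s, s ≠ t → Su u s → Su w s := by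
  obtain ⟨h1, h2⟩ := h
  have : u = (u - sv n t) + sv n t := by
    rw [tsub_add_cancel_of_le]
    intro i
    rw [sv_apply]
    split_ifs with hi
    · have : i = ⟨t, h1⟩ := Fin.ext hi.symm
      subst this; omega
    · omega
  refine ⟨u - sv n t, this, fun s hs hu => ?_⟩
  rw [this] at hu
  exact (Su_add _ _ _ hs).1 hu

def PU (n a p r : ℕ) : UpS n :=
  ⟨{u | P (Su u) a p r}, fun _ _ huv hu => P_congr (fun t _ _ => Su_mono huv t) hu⟩

lemma mem_PU {a p r : ℕ} {u : Fin n →₀ ℕ} : u ∈ PU n a p r ↔ P (Su u) a p r := Iff.rfl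

lemma PU_up {U : UpS n} {u : Fin n →₀ ℕ} (e : Fin n →₀ ℕ) (h : u ∈ U) : u + e ∈ U :=
  U.upper (le_add_of_nonneg_right zero_le) h

/-- independence of a variable outside the interval -/
lemma P_indep {a p r t : ℕ} {u : Fin n →₀ ℕ} (ht : t < p ∨ r ≤ t) (h : P (Su (u + sv n t)) a p r) : P (Su u) a p r :=
  P_congr (fun s h1 h2 hs => (Su_add u t s (by omega)).1 hs) h

lemma P_add {a p r t : ℕ} {u : Fin n →₀ ℕ} (h : P (Su u) a p r) : P (Su (u + sv n t)) a p r :=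
  P_congr (fun s h1 h2 hs => Su_mono (le_add_of_nonneg_right zero_le) s hs) h

lemma sub_P {a p r t : ℕ} {u : Fin n →₀ ℕ} (ht : t < p ∨ r ≤ t) (hu : Su u t) (h : P (Su u) a p r) :
    ∃ w ∈ PU n a p r, u = w + sv n t := by
  obtain ⟨w, hw, h'⟩ := Su_sub hu
  exact ⟨w, P_congr (fun s h1 h2 hs => h' s (by omega) hs) h, hw⟩

lemma seq_inj {t : ℕ → ℕ} {a : ℕ} (h : ∀ j, j < a → t j + 2 ≤ t (j+1)) : ∀ i j, i < j → j ≤ a → t i < t j := by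
  intro i j hij hj
  induction j with
  | zero => omega
  | succ j ih =>
    have := h j (by omega)
    rcases Nat.lt_or_ge i j with h' | h'
    · have := ih h' (by omega)
      omega
    · obtain rfl : i = j := by omega
      omega

noncomputable def sq (n : ℕ) (t : ℕ → ℕ) (a : ℕ) : Fin n →₀ ℕ := ∑ j ∈ Finset.range a, sv n (t j)

lemma sq_apply (t : ℕ → ℕ) (a : ℕ) (i : Fin n) : sq n t a i = ∑ j ∈ Finset.range a, if t j = i then 1 else 0 := by
  unfold sq
  rw [Finsupp.finsetSum_apply]
  exact Finset.sum_congr rfl fun j _ => sv_apply _ _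

lemma sq_le {t : ℕ → ℕ} {a : ℕ} (h : ∀ j, j < a → t j + 2 ≤ t (j+1)) {u : Fin n →₀ ℕ}
    (hu : ∀ j, j ≤ a → Su u (t j)) : sq n t (a+1) ≤ u := by
  intro i
  rw [sq_apply]
  by_cases hi : ∃ j ≤ a, t j = i
  · obtain ⟨j, hj, hji⟩ := hi
    rw [Finset.sum_eq_single_of_mem j (by simp; omega)]
    · rw [if_pos hji]
      obtain ⟨h1, h2⟩ := hu j hj
      have : i = ⟨t j, h1⟩ := Fin.ext hji.symm
      subst this; omega
    · intro l hl hlj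
      rw [if_neg]
      intro h'
      rw [Finset.mem_range] at hl
      rcases Nat.lt_or_ge l j with h3 | h3
      · have := seq_inj h l j h3 hj; omega
      · have := seq_inj h j l (by omega) (by omega); omega
  · rw [Finset.sum_eq_zero]
    · omega
    · intro j hj
      rw [if_neg]
      intro h'
      rw [Finset.mem_range] at hj
      exact hi ⟨j, by omega, h'⟩

lemma sq_Su {t : ℕ → ℕ} {a j : ℕ} (hj : j < a) (htn : t j < n) : Su (sq n t a) (t j) := by
  refine ⟨htn, ?_⟩
  rw [sq_apply]
  intro h
  have := Finset.sum_eq_zero_iff.1 h j (by simpa using hj)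
  simp at this

lemma sq_degree {t : ℕ → ℕ} {a : ℕ} (h : ∀ j, j < a → t j < n) : (sq n t a).degree = a := by
  unfold sq
  rw [map_sum]
  have : ∀ j ∈ Finset.range a, (sv n (t j)).degree = 1 := by
    intro j hj
    unfold sv
    rw [dif_pos (h j (by simpa using hj)), Finsupp.degree_single]
  rw [Finset.sum_congr rfl this]; simp

lemma degree_mono' {u v : Fin n →₀ ℕ} (h : u ≤ v) : u.degree ≤ v.degree := by
  rw [← tsub_add_cancel_of_le h, map_add]; omega

lemma PU_wit {a p r : ℕ} {u : Fin n →₀ ℕ} (h : u ∈ PU n a p r) :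
    ∃ w ∈ PU n a p r, w ≤ u ∧ w.degree = a := by
  cases a with
  | zero => exact ⟨0, trivial, zero_le, by simp⟩
  | succ a =>
    obtain ⟨t, h1, h2, h3, h4⟩ := P_seq.1 h
    refine ⟨sq n t (a+1), P_seq.2 ⟨t, h1, h2, h3, fun j hj => ?_⟩, sq_le h3 h4, ?_⟩
    · exact sq_Su (by omega) (h4 j hj).1
    · exact sq_degree fun j hj => (h4 j (by omega)).1

lemma PU_deg {a p r : ℕ} {u : Fin n →₀ ℕ} (h : u ∈ PU n a p r) : a ≤ u.degree := by
  obtain ⟨w, h1, h2, h3⟩ := PU_wit h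
  rw [← h3]; exact degree_mono' h2

lemma PU_deg' {a p r : ℕ} {u : Fin n →₀ ℕ} (h : u ∈ PU n a p r) (hd : a < u.degree) :
    ∃ j, ∃ w ∈ PU n a p r, u = w + Finsupp.single j 1 := by
  obtain ⟨w, h1, h2, h3⟩ := PU_wit h
  obtain ⟨j, hj⟩ : ∃ j, w j < u j := by
    by_contra! h'
    have := degree_mono' (show u ≤ w from h')
    omega
  have hle : Finsupp.single j 1 ≤ u - w := by
    rw [Finsupp.single_le_iff, Finsupp.tsub_apply]; omega
  refine ⟨j, w + (u - w - Finsupp.single j 1), PU_up _ h1, ?_⟩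
  rw [add_assoc, tsub_add_cancel_of_le hle, add_tsub_cancel_of_le h2]

end
end BC

namespace BC

section
variable {k : Type} [Field k] {n : ℕ} {U V V3 : UpS n}

lemma sv_eq {t : ℕ} (ht : t < n) : sv n t = Finsupp.single ⟨t, ht⟩ 1 := dif_pos ht

lemma mono_sv {t : ℕ} (ht : t < n) : MvPolynomial.monomial (sv n t) (1:k) = MvPolynomial.X ⟨t, ht⟩ := by
  rw [sv_eq ht]; rfl

lemma mono_sv_mem {t : ℕ} (ht : t < n) : MvPolynomial.monomial (sv n t) (1:k) ∈ maxIdl k n := by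
  rw [mono_sv ht]; exact X_mem _

lemma NM_L2 {t : ℕ} (ht : t < n) (hU : ∀ u, u + sv n t ∈ U → u ∈ U) (hV : ∀ u, u + sv n t ∈ V → u ∈ V)
    (h3 : ∀ u ∈ U, u ∈ V → u ∈ V3) (h5 : ∀ u ∈ U, u + sv n t ∈ V3) (h : ∀ u ∈ U, u ∈ V3 → u ∈ V ∨ Su u t) :
    (∀ i, Lin k n i (NM k U V) → Lin k n (i+1) (NM k U V) → Lin k n (i+1) (NM k U V3)) ∧
    (∀ i r s, Hb k n i (NM k U V) r → Hb k n (i+1) (NM k U V) s → Hb k n (i+1) (NM k U V3) (r + s)) ∧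
    (∀ s, Hb k n 0 (NM k U V) s → Hb k n 0 (NM k U V3) s) := by
  have hse := mulMap_SE (k := k) (U1 := U) (V1 := V) (U2 := U) (V2 := V) (U3 := U) (V3 := V3) (e1 := sv n t) (e2 := 0)
    (fun u hu => PU_up _ hu) (fun u _ hu => PU_up _ hu) (fun u hu => PU_up _ hu) (fun u hu hu' => PU_up _ (h3 u hu hu'))
    (fun u _ hu => hV u hu) (fun u hu => by rw [add_zero]; exact h5 u hu) (fun u hu hu' => by
      rw [add_zero] at hu'
      rcases h u hu hu' with h | h
      · exact Or.inl h
      · obtain ⟨w, rfl, -⟩ := Su_sub h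
        exact Or.inr ⟨w, hU w hu, rfl⟩)
    (fun u hu => Or.inr ⟨u, hu, (add_zero u).symm⟩)
  have hf := mulMap_id (k := k) (U := U) (V := V) (e := sv n t) (fun u hu => PU_up _ hu) (fun u _ hu => PU_up _ hu)
  have hf' := hf
  rw [mono_sv ht] at hf'
  have hFV : FreeVar (k := k) (⟨t, ht⟩ : Fin n) (NM k U V) := by
    apply NM_freeVar <;> rw [← sv_eq ht] <;> assumption
  exact ⟨fun i h0 h1 => fv_Lin hse hf' hFV h0 h1, fun i r s h0 h1 => hse.zrank (mono_sv_mem ht) hf h0 h1,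
    fun s h0 => hse.zrank0 (mono_sv_mem ht) hf h0⟩

lemma NM_L2_bin {t : ℕ} (ht : t < n) (hU : ∀ u, u + sv n t ∈ U → u ∈ U) (hV : ∀ u, u + sv n t ∈ V → u ∈ V)
    (h3 : ∀ u ∈ U, u ∈ V → u ∈ V3) (h5 : ∀ u ∈ U, u + sv n t ∈ V3) (h : ∀ u ∈ U, u ∈ V3 → u ∈ V ∨ Su u t)
    (N X : ℕ) (hN : ∀ i, Lin k n i (NM k U V) ∧ Hb k n i (NM k U V) (N.choose i * X)) :
    ∀ i, Lin k n i (NM k U V3) ∧ Hb k n i (NM k U V3) ((N+1).choose i * X) := by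
  obtain ⟨hl, hr, h0⟩ := NM_L2 (k := k) ht hU hV h3 h5 h
  intro i
  cases i with
  | zero =>
    refine ⟨Lin_zero _, ?_⟩
    have := h0 _ (hN 0).2
    simpa using this
  | succ i =>
    refine ⟨hl i (hN i).1 (hN (i+1)).1, ?_⟩
    have := hr i _ _ (hN i).2 (hN (i+1)).2
    rwa [← add_mul, ← Nat.choose_succ_succ] at this

lemma Lin_free (i : ℕ) : Lin k n i (Rg k n) := by
  cases i with
  | zero => exact Lin_zero _
  | succ i => exact Lin_of_Hb (Hb_free_succ i)

lemma Hb_free (i : ℕ) : Hb k n i (Rg k n) ((0:ℕ).choose i) := by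
  cases i with
  | zero => exact Hb_free_zero
  | succ i => exact Hb_free_succ i

abbrev Qf (k : Type) [Field k] (n b p r : ℕ) : Type := NM k (PU n b (p+1) r) (PU n (b+1) p r)

lemma PU_zero_eq (p r : ℕ) : PU n 0 p r = ⊥ := by
  ext u
  simp only [UpperSet.coe_bot, Set.mem_univ, iff_true]
  trivial

lemma Qf_zero_res (N : ℕ) : ∀ p r, r = p + N → r ≤ n → ∀ i, Lin k n i (Qf k n 0 p r) ∧
    Hb k n i (Qf k n 0 p r) (N.choose i * 1) := by
  induction N with
  | zero =>
    intro p r hr hn i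
    have e : Rg k n ≃ₗ[Rg k n] Qf k n 0 p r := by
      unfold Qf
      rw [PU_zero_eq]
      refine freeEquiv fun u hu => ?_
      have := P_len hu
      omega
    refine ⟨(Lin_free i).equiv e, ?_⟩
    rw [mul_one]
    exact (Hb_free i).equiv e
  | succ N ih =>
    intro p r hr hn
    have h0 := ih (p+1) r (by omega) hn
    have e : Qf k n 0 (p+1) r = NM k (PU n 0 (p+1) r) (PU n 1 (p+1) r) := by
      unfold Qf
      rw [PU_zero_eq, PU_zero_eq]
    have h1 : ∀ i, Lin k n i (NM k (PU n 0 (p+1) r) (PU n 1 (p+1) r)) ∧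
      Hb k n i (NM k (PU n 0 (p+1) r) (PU n 1 (p+1) r)) (N.choose i * 1) := by
      unfold Qf at h0
      rw [PU_zero_eq] at h0 ⊢
      exact h0
    refine NM_L2_bin (k := k) (U := PU n 0 (p+1) r) (V := PU n 1 (p+1) r) (V3 := PU n 1 p r) (t := p) (by omega) (fun u _ => trivial) (fun u hu => P_indep (by omega) hu)
      (fun u _ hu => P_mp (by omega) hu) (fun u _ => P_left_mk (by omega) (Su_self u (by omega)) trivial)
      (fun u _ hu => ?_) N 1 h1
    rcases P_left hu with h | h
    · exact Or.inl h
    · exact Or.inr h.1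

/-- one recursion step for `Qf`, given the module `A` -/
lemma Qf_step (b p r : ℕ) (hp : p + 1 < r) (hn : r ≤ n) (α β : ℕ → ℕ)
    (hA : ∀ i, Lin k n i (NM k (PU n (b+1) (p+2) r) (PU n (b+2) p r)) ∧
      Hb k n i (NM k (PU n (b+1) (p+2) r) (PU n (b+2) p r)) (α i))
    (hB : ∀ i, Lin k n i (Qf k n b (p+2) r) ∧ Hb k n i (Qf k n b (p+2) r) (β i)) (i : ℕ) :
    Lin k n i (Qf k n (b+1) p r) ∧ Hb k n i (Qf k n (b+1) p r) (α i + β i) := by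
  have hse := mulMap_SE (k := k) (U1 := PU n (b+1) (p+2) r) (V1 := PU n (b+2) p r) (U2 := PU n (b+1) (p+1) r)
    (V2 := PU n (b+2) p r) (U3 := PU n (b+1) (p+1) r) (V3 := PU n (b+1) (p+2) r) (e1 := 0) (e2 := 0)
    (fun u hu => PU_up _ (P_mp (by omega) hu)) (fun u _ hu => PU_up _ hu) (fun u hu => PU_up _ hu)
    (fun u _ hu => PU_up _ (P_dl hu)) (fun u _ hu => by rwa [add_zero] at hu)
    (fun u hu => PU_up _ (PU_up _ hu)) (fun u hu hu' => Or.inr ⟨u, by rwa [add_zero] at hu', (add_zero u).symm⟩)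
    (fun u hu => Or.inr ⟨u, hu, (add_zero u).symm⟩)
  have hx := NM_ext (k := k) (U := PU n (b+1) (p+2) r) (U' := PU n (b+1) (p+1) r) (V := PU n (b+2) p r) (b+1)
    (fun u hu => PU_up _ (P_mp (by omega) hu)) (fun u _ hu => PU_up _ hu) (fun u hu => PU_deg hu)
    (fun u hu hd => PU_deg' hu hd)
  have e : Qf k n b (p+2) r ≃ₗ[Rg k n] NM k (PU n (b+1) (p+1) r) (PU n (b+1) (p+2) r) := 
    mulEquiv (e := sv n (p+1)) (fun u hu => P_left_mk hp (Su_self u (by omega)) (P_add hu))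
      (fun u _ hu => PU_up _ hu) (fun u _ hu => P_indep (by omega) hu) (fun u hu => by
        rcases P_left hu with h | ⟨h1, h2⟩
        · exact Or.inl h
        · exact Or.inr (sub_P (by omega) h1 h2))
  exact ⟨Lin.ext hse hx (hA i).1 ((hB i).1.equiv e), hse.rank_ext hx (fun i => (hA i).1) (hA i).2 ((hB i).2.equiv e)⟩

lemma Qf_res (N b : ℕ) : ∀ p r, r = p + 2 * b + N → r ≤ n → ∀ i, Lin k n i (Qf k n b p r) ∧
    Hb k n i (Qf k n b p r) (N.choose i * (N+b).choose b) := by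
  induction N generalizing b with
  | zero =>
    induction b with
    | zero =>
      intro p r hr hn
      simpa using Qf_zero_res (k := k) 0 p r (by omega) hn
    | succ b ih =>
      intro p r hr hn i
      have hz : ∀ i, Hb k n i (NM k (PU n (b+1) (p+2) r) (PU n (b+2) p r)) 0 :=
        fun i => NM_zero (fun u hu => by have := P_len hu; omega) i
      have := Qf_step b p r (by omega) hn (fun _ => 0) _ (fun i => ⟨Lin_of_Hb (hz i), hz i⟩)
        (ih (p+2) r (by omega) hn) i
      simpa using this
  | succ N ihN =>
    induction b with
    | zero =>
      intro p r hr hn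
      simpa using Qf_zero_res (k := k) (N+1) p r (by omega) hn
    | succ b ih =>
      intro p r hr hn i
      have hA := NM_L2_bin (k := k) (U := PU n (b+1) (p+2) r) (V := PU n (b+2) (p+1) r) (V3 := PU n (b+2) p r) (t := p)
        (by omega) (fun u hu => P_indep (by omega) hu) (fun u hu => P_indep (by omega) hu)
        (fun u _ hu => P_mp (by omega) hu) (fun u hu => P_left_mk (by omega) (Su_self u (by omega)) (P_add hu))
        (fun u _ hu => (P_left hu).imp id And.left) N _ (ihN (b+1) (p+1) r (by omega) hn)
      have := Qf_step b p r (by omega) hn _ _ hA (ih (p+2) r (by omega) hn) i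
      convert this using 2
      rw [← mul_add]
      congr 1
      have h := Nat.choose_succ_succ (N+1+b) b
      rw [show N + 1 + (b+1) = (N+1+b).succ by omega, h, add_comm, show N + (b+1) = N+1+b by omega]

lemma choose_id1 (N b i : ℕ) : N.choose i * (N+b).choose b = (b+N).choose (b+i) * (b+i).choose b := by
  rcases Nat.lt_or_ge N i with h | h
  · rw [Nat.choose_eq_zero_of_lt h, Nat.choose_eq_zero_of_lt (by omega : b+N < b+i)]; simp
  · rw [Nat.choose_mul (by omega), mul_comm, add_comm N b]
    congr 2 <;> omega

def rp (b N i : ℕ) : ℕ := if i = 0 then 1 else (b+N).choose (b+i) * (b+i-1).choose b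

lemma RP_res (N b : ℕ) : ∀ p r, r = p + 2 * b + N → r ≤ n → ∀ i, Hb k n i (NM k ⊥ (PU n (b+1) p r)) (rp b N i) := by
  induction N with
  | zero =>
    intro p r hr hn i
    have e : Rg k n ≃ₗ[Rg k n] NM k ⊥ (PU n (b+1) p r) := 
      freeEquiv fun u hu => by have := P_len hu; omega
    have := (Hb_free (k := k) (n := n) i).equiv e
    convert this using 1
    unfold rp
    cases i with
    | zero => simp
    | succ i =>
      rw [if_neg (by omega), Nat.choose_eq_zero_of_lt (by omega : b + 0 < b + (i+1))]
      simp
  | succ N ih =>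
    intro p r hr hn i
    have hB := ih (p+1) r (by omega) hn
    have hse := mulMap_SE (k := k) (U1 := PU n b (p+2) r) (V1 := PU n (b+1) (p+1) r) (U2 := ⊥)
      (V2 := PU n (b+1) (p+1) r) (U3 := ⊥) (V3 := PU n (b+1) p r) (e1 := sv n p) (e2 := 0)
      (fun u hu => trivial) (fun u _ hu => PU_up _ hu) (fun u hu => trivial)
      (fun u _ hu => PU_up _ (P_mp (by omega) hu)) (fun u _ hu => P_indep (by omega) hu)
      (fun u hu => PU_up _ (P_left_mk (by omega) (Su_self u (by omega)) (P_add hu))) (fun u _ hu' => by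
        rw [add_zero] at hu'
        rcases P_left hu' with h | ⟨h1, h2⟩
        · exact Or.inl h
        · exact Or.inr (sub_P (by omega) h1 h2))
      (fun u hu => Or.inr ⟨u, hu, (add_zero u).symm⟩)
    have hf := mulMap_smul (k := k) (e := sv n p) (U := PU n b (p+2) r) (V := PU n (b+1) (p+1) r) (U' := ⊥)
      (V' := PU n (b+1) (p+1) r) (fun u hu => trivial) (fun u _ hu => PU_up _ hu) (fun u hu => trivial)
      (fun u _ hu => PU_up _ hu)
    cases i with
    | zero => exact hse.zrank0 (mono_sv_mem (by omega)) hf (hB 0)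
    | succ i =>
      have := hse.zrank (mono_sv_mem (by omega)) hf (Qf_res N b (p+1) r (by omega) hn i).2 (hB (i+1))
      convert this using 1
      unfold rp
      rw [if_neg (by omega), if_neg (by omega), choose_id1, show b + (i+1) - 1 = b + i by omega, ← add_mul]
      congr 1

end
end BC

namespace BC

section
variable {k : Type} [Field k] {n : ℕ}

section
variable {W' W K V : Type} [AddCommGroup W'] [Module (Rg k n) W'] [AddCommGroup W] [Module (Rg k n) W]
  [AddCommGroup K] [Module (Rg k n) K] [AddCommGroup V] [Module (Rg k n) V]

lemma Wabs_low {f1 : W' →ₗ[Rg k n] W} {g1 : W →ₗ[Rg k n] K} (h1 : SE f1 g1)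
    {f2 : K →ₗ[Rg k n] W} {x : Rg k n} (hx : x ∈ maxIdl k n)
    (hc : f2 ∘ₗ g1 = x • LinearMap.id) (hE : ExtP f1) (c : ℕ) (hL : ∀ i ≤ c, Lin k n i W') :
    ∀ i ≤ c + 1, ∀ e : E k n i W, pull i f2 e = 0 := by
  intro i hi e
  have hinj : ∀ y : E k n i K, pull i g1 y = 0 → y = 0 := by
    intro y hy
    cases i with
    | zero => exact (injective_iff_map_eq_zero _).1 h1.inj0 y hy
    | succ i =>
      obtain ⟨z, rfl⟩ := (h1.exact3 i y).1 hy
      obtain ⟨z, rfl⟩ := (hL i (by omega)).surj hE z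
      exact (h1.exact1 i _).2 ⟨_, rfl⟩
  apply hinj
  rw [← pull_comp, hc, pull_smul_eq_zero i x hx]

lemma Wabs_Lin {f2 : K →ₗ[Rg k n] W} {g2 : W →ₗ[Rg k n] V} (h2 : SE f2 g2) {i : ℕ}
    (h0 : ∀ e : E k n i W, pull i f2 e = 0) (hV : Lin k n i V) : Lin k n i W :=
  Lin.of_surj (g := g2) (fun e => (h2.exact2 i e).1 (h0 e)) hV

lemma Wabs_rank {f2 : K →ₗ[Rg k n] W} {g2 : W →ₗ[Rg k n] V} (h2 : SE f2 g2) {i : ℕ}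
    (h0 : ∀ e : E k n i W, pull i f2 e = 0) (h0' : ∀ e : E k n (i+1) W, pull (i+1) f2 e = 0)
    {v q w : ℕ} (hv : Hb k n (i+1) V v) (hq : Hb k n i K q) (hw : q + w = v) : Hb k n (i+1) W w := by
  have := rank_exactR (h2.δ i) (pull (i+1) g2) ((injective_iff_map_eq_zero _).2 fun y hy => by
    obtain ⟨z, rfl⟩ := (h2.exact1 i y).1 hy
    exact h0 z) (h2.exact3 i) (fun e => (h2.exact2 _ e).1 (h0' e))
  unfold Hb at *
  rw [hv, hq, ← hw, Nat.cast_add] at this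
  rw [add_comm, add_comm (q : Cardinal)] at this
  exact ((Cardinal.add_right_inj_of_lt_aleph0 Cardinal.natCast_lt_aleph0).1 this).symm

lemma Wabs_rank0 {f2 : K →ₗ[Rg k n] W} {g2 : W →ₗ[Rg k n] V} (h2 : SE f2 g2)
    (h0 : ∀ e : E k n 0 W, pull 0 f2 e = 0)
    {v : ℕ} (hv : Hb k n 0 V v) : Hb k n 0 W v := by
  unfold Hb at *
  rw [← hv]
  exact (LinearEquiv.ofBijective ((pull 0 g2).restrictScalars k)
    ⟨h2.inj0, fun e => (h2.exact2 _ e).1 (h0 e)⟩).rank_eq.symm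

lemma Wabs_top {f1 : W' →ₗ[Rg k n] W} {g1 : W →ₗ[Rg k n] K} (h1 : SE f1 g1)
    {f2 : K →ₗ[Rg k n] W} {g2 : W →ₗ[Rg k n] V} (h2 : SE f2 g2) {x : Rg k n} (hx : x ∈ maxIdl k n)
    (hc : f2 ∘ₗ g1 = x • LinearMap.id) {i r : ℕ} (hV : Hb k n (i+1) V 0) (hK : Hb k n (i+1) K 0)
    (hW : Hb k n i W' r) : Hb k n i W r := by
  have hg1 : ∀ y : E k n i K, pull i g1 y = 0 := by
    intro y
    obtain ⟨z, rfl⟩ := (h2.exact1 i y).1 (Hb_zero.1 hV _)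
    rw [← pull_comp, hc, pull_smul_eq_zero i x hx]
  unfold Hb at *
  rw [← hW]
  refine (LinearEquiv.ofBijective ((pull i f1).restrictScalars k)
    ⟨(injective_iff_map_eq_zero _).2 fun y hy => ?_, fun e => (h1.exact1 i e).1 (Hb_zero.1 hK _)⟩).rank_eq
  obtain ⟨z, rfl⟩ := (h1.exact2 i y).1 hy
  exact hg1 z

lemma Wabs_zero {f2 : K →ₗ[Rg k n] W} {g2 : W →ₗ[Rg k n] V} (h2 : SE f2 g2) {i : ℕ}
    (hV : Hb k n i V 0) (hK : Hb k n i K 0) : Hb k n i W 0 := by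
  rw [Hb_zero] at *
  intro e
  obtain ⟨z, rfl⟩ := (h2.exact2 i e).1 (hK _)
  rw [hV z, map_zero]
end

abbrev Wm (k : Type) [Field k] (n b p s : ℕ) : Type := NM k (PU n b (p+1) s) (PU n (b+1) p (s+1))

def SU (n t : ℕ) : UpS n := ⟨{u | Su u t}, fun _ _ h hu => Su_mono h t hu⟩

def wt (b c i : ℕ) : ℕ := if i ≤ c then (b+c+1).choose i * (b+c-i).choose b else if i = c+1 then 1 else 0

def WT (k : Type) [Field k] (n c b : ℕ) : Prop := ∀ p s, s = p + 2 * b + c → s + 1 ≤ n → ∀ i,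
  (i ≤ c → Lin k n i (Wm k n b p s)) ∧ Hb k n i (Wm k n b p s) (wt b c i)

lemma WT_b0 (c : ℕ) : WT k n c 0 := by
  intro p s hs hn i
  have h := Qf_zero_res (k := k) (n := n) (c+1) p (s+1) (by omega) hn i
  unfold Qf at h
  unfold Wm
  rw [PU_zero_eq] at h ⊢
  refine ⟨fun _ => h.1, ?_⟩
  convert h.2 using 1
  unfold wt
  split_ifs with h1 h2
  · simp
  · subst h2; simp
  · rw [Nat.choose_eq_zero_of_lt (by omega)]

lemma WT_c0 (b : ℕ) : WT k n 0 b := by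
  intro p s hs hn i
  refine ⟨fun hi => ?_, ?_⟩
  · obtain rfl : i = 0 := by omega
    exact Lin_zero _
  rcases Nat.eq_zero_or_pos b with rfl | hb
  · exact (WT_b0 0 p s hs hn i).2
  obtain ⟨b, rfl⟩ : ∃ b', b = b' + 1 := ⟨b-1, by omega⟩
  have h := RP_res (k := k) (n := n) 1 (b+1) p (s+1) (by omega) hn i
  have e : NM k ⊥ (PU n (b+1+1) p (s+1)) ≃ₗ[Rg k n] Wm k n (b+1) p s := by
    refine mulEquiv (e := sq n (fun j => p + 1 + 2 * j) (b+1)) (fun u _ => ?_) (fun u _ hu => PU_up _ hu)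
      (fun u _ hu => ?_) (fun u hu => Or.inr ?_)
    · refine P_tight_mk (by omega) fun j hj => ?_
      exact Su_mono (le_add_of_nonneg_left zero_le) _ (sq_Su (t := fun j => p + 1 + 2 * j) (by omega) (by omega))
    · refine P_tight_mk (by omega) fun j hj => ?_
      obtain ⟨h1, h2⟩ := P_tight (by omega) hu j hj
      refine ⟨h1, ?_⟩
      rw [Finsupp.add_apply, sq_apply, Finset.sum_eq_zero, add_zero] at h2
      · exact h2
      · intro j' _
        rw [if_neg]
        simp only
        omega
    · have h1 := P_tight (by omega) hu
      have h2 := sq_le (t := fun j => p + 1 + 2 * j) (a := b) (by intro j hj; omega) h1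
      exact ⟨u - sq n (fun j => p + 1 + 2 * j) (b+1), trivial, (tsub_add_cancel_of_le h2).symm⟩
  convert h.equiv e using 1
  unfold wt rp
  rcases i with _ | _ | i
  · simp
  · simp
  · rw [if_neg (by omega), if_neg (by omega), if_neg (by omega), Nat.choose_eq_zero_of_lt (by omega)]; simp

lemma wt_id (b c i : ℕ) (hi : i + 1 ≤ c) :
    wt b c i + wt (b+1) c (i+1) = (c+1).choose (i+1) * (c+(b+1)).choose (b+1) := by
  unfold wt
  rw [if_pos (by omega), if_pos hi]
  have key : ∀ B j x, x = B + c → j ≤ c → (x).choose j * (x-j).choose B = (c).choose j * x.choose B := by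
    intro B j x hx hj
    have h1 := Nat.choose_mul (n := x) (k := B + j) (s := j) (by omega)
    have h2 := Nat.choose_mul (n := x) (k := B + j) (s := B) (by omega)
    have h3 := Nat.choose_symm_add (a := B) (b := j)
    rw [show B + j - j = B by omega] at h1
    rw [show B + j - B = j by omega, show x - B = c by omega] at h2
    rw [← h1, ← h3, h2, mul_comm]
  have k1 := key (b+1) (i+1) (b+1+c) rfl hi
  have k2 := key (b+1) i (b+1+c) rfl (by omega)
  have e1 := Nat.choose_succ_succ (b+1+c) i
  have e2 := Nat.choose_succ_succ c i
  have e3 := Nat.choose_succ_succ (b+c-i) b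
  simp only [Nat.succ_eq_add_one] at e1 e2 e3
  rw [show b + c - i + 1 = b+1+c-i by omega] at e3
  rw [show b + 1 + c - (i+1) = b + c - i by omega] at k1 ⊢
  rw [show b + c + 1 = b+1+c by omega, show c + (b+1) = b+1+c by omega, e1, e2]
  rw [e3] at k2
  nlinarith [k1, k2]

lemma WT_step (c b : ℕ) (hA : WT k n c (b+1)) (hB : WT k n (c+1) b) : WT k n (c+1) (b+1) := by
  intro p s hs hn
  obtain ⟨t, rfl⟩ : ∃ t, s = t + 2 := ⟨s - 2, by omega⟩
  let J : UpS n := PU n (b+2) p (t+3)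
  let L : UpS n := PU n (b+1) (p+1) (t+2)
  let K : UpS n := PU n (b+1) (p+1) (t+1) ⊓ J
  let V3 : UpS n := J ⊓ SU n (t+2)
  have hW1 := hA p (t+1) (by omega) (by omega)
  obtain ⟨hl, hr, h0⟩ := NM_L2 (k := k) (U := PU n (b+1) (p+1) (t+1)) (V := PU n (b+2) p (t+2)) (V3 := J) (t := t+2)
    (by omega) (fun u hu => P_indep (by omega) hu) (fun u hu => P_indep (by omega) hu)
    (fun u _ hu => P_mr (by omega) hu)
    (fun u hu => P_right_mk (by omega) (Su_self u (by omega)) (P_add (P_mp (by omega) hu)))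
    (fun u _ hu => (P_right hu).imp id And.left)
  have hLW' : ∀ i ≤ c, Lin k n i (NM k (PU n (b+1) (p+1) (t+1)) J) := by
    intro i hi
    cases i with
    | zero => exact Lin_zero _
    | succ i => exact hl i ((hW1 i).1 (by omega)) ((hW1 (i+1)).1 hi)
  have hK := hB p t (by omega) (by omega)
  have eK : Wm k n b p t ≃ₗ[Rg k n] NM k L K := by
    refine mulEquiv (e := sv n (t+1)) (fun u hu => P_right_mk (by omega) (Su_self u (by omega)) (P_add hu))
      (fun u hu hu' => ?_) (fun u _ hu => ?_) (fun u hu => ?_)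
    · refine UpperSet.mem_inf_iff.2 ?_
      rcases P_splice hu' hu (by omega) with h | h
      · exact Or.inl (P_add h)
      · exact Or.inr (P_mr (by omega) (P_right_mk (r := t) (by omega) (Su_self u (by omega)) (P_add h)))
    · rcases UpperSet.mem_inf_iff.1 hu with h | h
      · exact P_mp (by omega) (P_indep (t := t+1) (by omega) h)
      · exact P_indep (t := t+1) (by omega) (P_dr h)
    · rcases P_right hu with h | ⟨h1, h2⟩
      · exact Or.inl (UpperSet.mem_inf_iff.2 (Or.inl h))
      · exact Or.inr (sub_P (by omega) h1 h2)
  have hV := NM_L2_bin (k := k) (U := L) (V := PU n (b+2) p (t+2)) (V3 := V3) (t := t+2) (by omega)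
    (fun u hu => P_indep (by omega) hu) (fun u hu => P_indep (by omega) hu)
    (fun u _ hu => UpperSet.mem_inf_iff.2 (Or.inl (P_mr (by omega) hu)))
    (fun u hu => UpperSet.mem_inf_iff.2 (Or.inr (Su_self u (by omega))))
    (fun u _ hu => by
      rcases UpperSet.mem_inf_iff.1 hu with h | h
      · exact (P_right h).imp id And.left
      · exact Or.inr h)
    _ _ (Qf_res (k := k) (c+1) (b+1) p (t+2) (by omega) (by omega))
  have f1a : ∀ u ∈ PU n (b+1) (p+1) (t+1), u + 0 ∈ L := fun u hu => PU_up _ (P_mr (by omega) hu)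
  have f1b : ∀ u ∈ PU n (b+1) (p+1) (t+1), u ∈ J → u + 0 ∈ J := fun u _ hu => PU_up _ hu
  have g1a : ∀ u ∈ L, u + 0 ∈ L := fun u hu => PU_up _ hu
  have g1b : ∀ u ∈ L, u ∈ J → u + 0 ∈ K := fun u _ hu => PU_up _ (UpperSet.mem_inf_iff.2 (Or.inr hu))
  have S1 := mulMap_SE (k := k) (U1 := PU n (b+1) (p+1) (t+1)) (V1 := J) (U2 := L) (V2 := J) (U3 := L) (V3 := K)
    (e1 := 0) (e2 := 0) f1a f1b g1a g1b (fun u _ hu => by rwa [add_zero] at hu)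
    (fun u hu => PU_up _ (PU_up _ (UpperSet.mem_inf_iff.2 (Or.inl hu))))
    (fun u _ hu => by
      rw [add_zero] at hu
      rcases UpperSet.mem_inf_iff.1 hu with h | h
      · exact Or.inr ⟨u, h, (add_zero u).symm⟩
      · exact Or.inl h)
    (fun u hu => Or.inr ⟨u, hu, (add_zero u).symm⟩)
  have hE := NM_ext (k := k) (U := PU n (b+1) (p+1) (t+1)) (U' := L) (V := J) (b+1) f1a f1b
    (fun u hu => PU_deg hu) (fun u hu hd => PU_deg' hu hd)
  have f2a : ∀ u ∈ L, u + sv n (t+2) ∈ L := fun u hu => PU_up _ hu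
  have f2b : ∀ u ∈ L, u ∈ K → u + sv n (t+2) ∈ J := fun u _ hu => by
    rcases UpperSet.mem_inf_iff.1 hu with h | h
    · exact P_right_mk (by omega) (Su_self u (by omega)) (P_add (P_mp (by omega) h))
    · exact PU_up _ h
  have g2b : ∀ u ∈ L, u ∈ J → u + 0 ∈ V3 := fun u _ hu => PU_up _ (UpperSet.mem_inf_iff.2 (Or.inl hu))
  have S2 := mulMap_SE (k := k) (U1 := L) (V1 := K) (U2 := L) (V2 := J) (U3 := L) (V3 := V3)
    (e1 := sv n (t+2)) (e2 := 0) f2a f2b g1a g2b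
    (fun u hu hu' => by
      refine UpperSet.mem_inf_iff.2 ?_
      rcases P_right hu' with h | ⟨-, h⟩
      · exact Or.inr (P_mr (by omega) (P_indep (t := t+2) (by omega) h))
      · have h' := P_indep (t := t+2) (by omega) h
        rcases P_right hu with h3 | ⟨h3, h4⟩
        · exact Or.inl h3
        · rcases P_splice h' h4 (by omega) with h5 | h5
          · exact Or.inl h5
          · exact Or.inr (P_mr (by omega) (P_right_mk (by omega) h3 h5)))
    (fun u hu => PU_up _ (UpperSet.mem_inf_iff.2 (Or.inr (Su_self u (by omega)))))
    (fun u hu hu' => by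
      rw [add_zero] at hu'
      rcases UpperSet.mem_inf_iff.1 hu' with h | h
      · exact Or.inl h
      · exact Or.inr (sub_P (by omega) h hu))
    (fun u hu => Or.inr ⟨u, hu, (add_zero u).symm⟩)
  have hc : mulMap (k := k) (sv n (t+2)) f2a f2b ∘ₗ mulMap (k := k) 0 g1a g1b =
      MvPolynomial.monomial (0 + sv n (t+2)) (1:k) • LinearMap.id := by
    rw [mulMap_comp g1a g1b f2a f2b (fun u hu => PU_up _ hu) (fun u _ hu => PU_up _ hu)]
    exact mulMap_id _ _
  rw [zero_add] at hc
  have hx := mono_sv_mem (k := k) (n := n) (t := t+2) (by omega)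
  have hz := Wabs_low S1 hx hc hE c hLW'
  have hKb := fun i => (hK i).2.equiv eK
  have hV0 : ∀ i, c + 3 ≤ i → Hb k n i (NM k L V3) 0 := by
    intro i hi
    have := (hV i).2
    rwa [Nat.choose_eq_zero_of_lt (by omega), zero_mul] at this
  have hK0 : ∀ i, c + 3 ≤ i → Hb k n i (NM k L K) 0 := by
    intro i hi
    have := hKb i
    unfold wt at this
    rwa [if_neg (by omega), if_neg (by omega)] at this
  intro i
  refine ⟨fun hi => Wabs_Lin S2 (hz i hi) (hV i).1, ?_⟩
  rcases Nat.lt_or_ge (c+1) i with hi | hi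
  · unfold wt
    rw [if_neg (by omega)]
    split_ifs with h
    · subst h
      refine Wabs_top S1 S2 hx hc (hV0 _ (by omega)) (hK0 _ (by omega)) ?_
      have := hr (c+1) _ _ (hW1 (c+1)).2 (hW1 (c+2)).2
      unfold wt at this
      rwa [if_neg (by omega), if_pos rfl, if_neg (by omega), if_neg (by omega), add_zero] at this
    · exact Wabs_zero S2 (hV0 _ (by omega)) (hK0 _ (by omega))
  · cases i with
    | zero =>
      convert Wabs_rank0 S2 (hz 0 hi) (hV 0).2 using 1
      unfold wt
      simp
      congr 1
      omega
    | succ i =>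
      exact Wabs_rank S2 (hz i (by omega)) (hz (i+1) hi) (hV (i+1)).2 (hKb i) (wt_id b (c+1) i hi)

lemma WT_all (c b : ℕ) : WT k n c b := by
  induction c generalizing b with
  | zero => exact WT_c0 b
  | succ c ih =>
    induction b with
    | zero => exact WT_b0 _
    | succ b ihb => exact WT_step c b (ih _) ihb

end
end BC

namespace BC

section
variable {k : Type} [Field k] {n : ℕ}

def IU (b s : ℕ) : UpS (s+2) := PU (s+2) (b+1) 1 (s+1) ⊓ (SU (s+2) 0 ⊔ SU (s+2) (s+1) ⊔ PU (s+2) b 2 s)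

lemma mem_IU {b s : ℕ} {u : Fin (s+2) →₀ ℕ} : u ∈ IU b s ↔
    u ∈ PU (s+2) (b+1) 1 (s+1) ∨ (Su u 0 ∧ Su u (s+1) ∧ u ∈ PU (s+2) b 2 s) := by
  unfold IU
  rw [UpperSet.mem_inf_iff, UpperSet.mem_sup_iff, UpperSet.mem_sup_iff, and_assoc]
  rfl

lemma sub_IU {b s : ℕ} {u : Fin (s+2) →₀ ℕ} (h0 : Su u 0) (h1 : Su u (s+1)) (h2 : u ∈ PU (s+2) b 2 s) :
    ∃ w ∈ PU (s+2) b 2 s, u = w + (sv (s+2) 0 + sv (s+2) (s+1)) := by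
  obtain ⟨w, rfl, hw⟩ := Su_sub h0
  obtain ⟨v, rfl, hv⟩ := Su_sub (hw (s+1) (by omega) h1)
  refine ⟨v, ?_, by rw [add_assoc, add_comm (sv _ (s+1))]⟩
  exact P_indep (t := s+1) (by omega) (P_indep (t := 0) (by omega) h2)

lemma IU_res (b c s : ℕ) (hs : s = 2 * b + c + 1) : Hb k (s+2) 0 (Rg k (s+2) ⧸ mI k (IU b s)) 1 ∧
    ∀ i, Hb k (s+2) (i+1) (Rg k (s+2) ⧸ mI k (IU b s)) (wt b c i + rp b (c+1) (i+1)) := by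
  have hW := WT_all (k := k) (n := s+2) c b 1 s (by omega) (by omega)
  have hJ := RP_res (k := k) (n := s+2) (c+1) b 1 (s+1) (by omega) (by omega)
  have hse := mulMap_SE (k := k) (U1 := PU (s+2) b 2 s) (V1 := PU (s+2) (b+1) 1 (s+1)) (U2 := ⊥)
      (V2 := PU (s+2) (b+1) 1 (s+1)) (U3 := ⊥) (V3 := IU b s) (e1 := sv (s+2) 0 + sv (s+2) (s+1)) (e2 := 0)
      (fun u hu => trivial) (fun u _ hu => PU_up _ hu) (fun u hu => trivial)
      (fun u _ hu => PU_up _ (mem_IU.2 (Or.inl hu))) (fun u _ hu => by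
        rw [← add_assoc] at hu
        exact P_indep (t := 0) (by omega) (P_indep (t := s+1) (by omega) hu))
      (fun u hu => PU_up _ (mem_IU.2 (Or.inr ⟨by
        rw [← add_assoc, add_right_comm]; exact Su_self _ (by omega), by
        rw [← add_assoc]; exact Su_self _ (by omega), PU_up _ hu⟩))) (fun u _ hu' => by
        rw [add_zero, mem_IU] at hu'
        rcases hu' with h | ⟨h1, h2, h3⟩
        · exact Or.inl h
        · exact Or.inr (sub_IU h1 h2 h3))
      (fun u hu => Or.inr ⟨u, hu, (add_zero u).symm⟩)
  have hf := mulMap_smul (k := k) (e := sv (s+2) 0 + sv (s+2) (s+1)) (U := PU (s+2) b 2 s) (V := PU (s+2) (b+1) 1 (s+1)) (U' := ⊥)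
      (V' := PU (s+2) (b+1) 1 (s+1)) (fun u hu => trivial) (fun u _ hu => PU_up _ hu) (fun u hu => trivial)
      (fun u _ hu => PU_up _ hu)
  have hx : MvPolynomial.monomial (sv (s+2) 0 + sv (s+2) (s+1)) (1:k) ∈ maxIdl k (s+2) := by
    have : MvPolynomial.monomial (sv (s+2) 0 + sv (s+2) (s+1)) (1:k) =
      MvPolynomial.monomial (sv (s+2) 0) (1:k) * MvPolynomial.monomial (sv (s+2) (s+1)) (1:k) := by
      rw [MvPolynomial.monomial_mul, one_mul]
    rw [this]
    exact Ideal.mul_mem_right _ _ (mono_sv_mem (by omega))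
  have e := (topEquiv (k := k) (IU b s)).symm
  refine ⟨(hse.zrank0 hx hf (hJ 0)).equiv e, fun i => ?_⟩
  exact (hse.zrank hx hf (hW i).2 (hJ (i+1))).equiv e

lemma Xv_eq {t : ℕ} (h1 : 1 ≤ t) (h2 : t ≤ n) : Xv k n t = MvPolynomial.monomial (sv n (t-1)) (1:k) := by
  unfold Xv
  rw [dif_pos ⟨h1, h2⟩, mono_sv (by omega)]

lemma seq_mono {t : ℕ → ℕ} {a : ℕ} (h : ∀ j, j < a → t j + 2 ≤ t (j+1)) : ∀ i j, i ≤ j → j ≤ a → t i ≤ t j := by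
  intro i j hij hj
  rcases Nat.lt_or_ge i j with h' | h'
  · exact (seq_inj h i j h' hj).le
  · obtain rfl : i = j := by omega
    exact le_rfl

lemma prod_Xv {t : ℕ → ℕ} {a : ℕ} (h : ∀ j < a, 1 ≤ t j ∧ t j ≤ n) :
    ∏ j ∈ Finset.range a, Xv k n (t j) = MvPolynomial.monomial (sq n (fun j => t j - 1) a) (1:k) := by
  unfold sq
  rw [MvPolynomial.monomial_sum_one]
  exact Finset.prod_congr rfl fun j hj => Xv_eq (h j (by simpa using hj)).1 (h j (by simpa using hj)).2

lemma idealI_eq (a p r : ℕ) (hr : r ≤ n) : idealI k n (a+1) (p+1) r = mI k (PU n (a+1) p r) := by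
  apply le_antisymm
  · refine Ideal.span_le.2 ?_
    rintro _ ⟨t, h1, h2, h3, rfl⟩
    have h3' : ∀ j, j < a → t j + 2 ≤ t (j+1) := fun j hj => h3 j (by omega)
    rw [Nat.add_sub_cancel] at h2
    have hb : ∀ j < a + 1, p + 1 ≤ t j ∧ t j ≤ r := fun j hj =>
      ⟨h1.trans (seq_mono h3' 0 j (by omega) (by omega)), (seq_mono h3' j a (by omega) le_rfl).trans h2⟩
    rw [prod_Xv (fun j hj => by have := hb j hj; omega)]
    refine mono_mem ?_ 1
    refine P_seq.2 ⟨fun j => t j - 1, by simp only; omega, ?_, ?_, ?_⟩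
    · have := hb a (by omega); simp only; omega
    · intro j hj
      have := hb j (by omega)
      have := h3' j hj
      simp only; omega
    · intro j hj
      have := hb j (by omega)
      exact sq_Su (t := fun j => t j - 1) (by omega) (by omega)
  · intro f hf
    apply mem_of_supp
    intro u hu
    obtain ⟨t, h1, h2, h3, h4⟩ := P_seq.1 (mem_mI.1 hf u hu)
    have hle := sq_le h3 h4
    have : MvPolynomial.monomial u (1:k) = MvPolynomial.monomial (u - sq n t (a+1)) (1:k) *
        MvPolynomial.monomial (sq n t (a+1)) (1:k) := by
      rw [MvPolynomial.monomial_mul, one_mul, tsub_add_cancel_of_le hle]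
    rw [this]
    refine Ideal.mul_mem_left _ _ (Ideal.subset_span ⟨fun j => t j + 1, by simp only; omega, ?_, ?_, ?_⟩)
    · simp only [Nat.add_sub_cancel]; omega
    · intro j hj
      have := h3 j (by omega)
      simp only; omega
    · rw [prod_Xv]
      · simp only [Nat.add_sub_cancel]
      · intro j hj
        have := seq_mono h3 j a (by omega) le_rfl
        omega

lemma ideal_main (b s : ℕ) : idealI k (s+2) (b+2) 2 (s+1) +
    Ideal.span {Xv k (s+2) 1 * Xv k (s+2) (s+2)} * idealI k (s+2) (b+1) 3 s = mI k (IU (b+1) s) := by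
  rw [idealI_eq (b+1) 1 (s+1) (by omega), idealI_eq b 2 s (by omega), Xv_eq (by omega) (by omega),
    Xv_eq (by omega) (by omega), MvPolynomial.monomial_mul, one_mul]
  change _ + Ideal.span {MvPolynomial.monomial (sv (s+2) 0 + sv (s+2) (s+1)) (1:k)} * _ = _
  apply le_antisymm
  · refine sup_le ?_ ?_
    · intro f hf
      rw [mem_mI] at *
      exact fun u hu => mem_IU.2 (Or.inl (hf u hu))
    · rw [Ideal.span_singleton_mul_le_iff]
      intro z hz
      refine mul_mem_mI (U := PU (s+2) (b+1) 2 s) (fun u hu => mem_IU.2 (Or.inr ⟨by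
        rw [← add_assoc, add_right_comm]; exact Su_self _ (by omega), by
        rw [← add_assoc]; exact Su_self _ (by omega), PU_up _ hu⟩)) hz
  · intro f hf
    apply mem_of_supp
    intro u hu
    rcases mem_IU.1 (mem_mI.1 hf u hu) with h | ⟨h1, h2, h3⟩
    · exact Ideal.mem_sup_left (mono_mem h 1)
    · obtain ⟨w, hw, rfl⟩ := sub_IU h1 h2 h3
      have : MvPolynomial.monomial (w + (sv (s+2) 0 + sv (s+2) (s+1))) (1:k) =
        MvPolynomial.monomial (sv (s+2) 0 + sv (s+2) (s+1)) (1:k) * MvPolynomial.monomial w (1:k) := by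
        rw [MvPolynomial.monomial_mul, one_mul, add_comm w]
      rw [this]
      exact Ideal.mem_sup_right (Ideal.mul_mem_mul (Ideal.subset_span rfl) (mono_mem hw 1))

lemma eta_id (b c i : ℕ) (hi : i ≤ c) : wt b c i + rp b (c+1) (i+1) =
    eta (2*b+1) (2*b+c+3) (i+1) + eta (2*b+1) (2*b+c+3) (2*b+c+3 - (2*b+1) - (i+1)) := by
  unfold wt rp eta
  rw [if_pos hi, if_neg (by omega), if_pos (by omega), if_pos (by omega), show (2*b+1)/2 = b by omega,
    show 2*b+c+3-b-2 = b+c+1 by omega, show 2*b+c+3 - (2*b+1) - (i+1) = c+1-i by omega,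
    show b + (c+1-i) - 1 = b+c-i by omega, show b + (c+1-i) = b+c+1-i by omega, Nat.choose_symm (by omega),
    show b + (c+1) = b+c+1 by omega, add_comm]

end
end BC

namespace BC

section
variable {k : Type} [Field k] {n : ℕ}

def Kil (k : Type) [Field k] (n : ℕ) (H : Type) [AddCommGroup H] [Module (Rg k n) H] : Prop :=
  ∀ r ∈ maxIdl k n, ∀ h : H, r • h = 0

lemma Kil_X : Kil k n (Xk k n) := smul_Xk

lemma Kil.smul {H : Type} [AddCommGroup H] [Module (Rg k n) H] (hK : Kil k n H) (r : Rg k n) (h : H) :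
    r • h = (MvPolynomial.C (MvPolynomial.constantCoeff r) : Rg k n) • h := by
  have := hK _ (sub_const_mem r) h
  rwa [sub_smul, sub_eq_zero] at this

section
variable {H Y : Type} [AddCommGroup H] [Module (Rg k n) H] [Module k H] [IsScalarTower k (Rg k n) H]
  [AddCommGroup Y] [Module (Rg k n) Y] [Module k Y] [IsScalarTower k (Rg k n) Y]

lemma C_smul (c : k) (h : H) : (MvPolynomial.C c : Rg k n) • h = c • h := by
  rw [← MvPolynomial.algebraMap_eq, algebraMap_smul]

def toR (hH : Kil k n H) (hY : Kil k n Y) (f : H →ₗ[k] Y) : H →ₗ[Rg k n] Y where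
  toFun := f
  map_add' := map_add f
  map_smul' r x := by
    rw [RingHom.id_apply, hH.smul, hY.smul, C_smul, C_smul, map_smul]

end

lemma rank_Xk : Module.rank k (Xk k n) = 1 := by
  have e1 : E k n 0 (Rg k n) ≃ₗ[Rg k n] Xk k n := E0equiv.trans (LinearMap.ringLmapEquivSelf (Rg k n) (Rg k n) (Xk k n))
  have h2 : Module.rank k (E k n 0 (Rg k n)) = Module.rank k (Xk k n) :=
    (e1.restrictScalars k).rank_eq
  rw [← h2]
  have := Hb_free_zero (k := k) (n := n)
  unfold Hb at this
  simpa using this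

lemma rank_of_hom {H : Type} [AddCommGroup H] [Module (Rg k n) H] [Module k H] [IsScalarTower k (Rg k n) H]
    (hK : Kil k n H) {r : ℕ} (h : Module.rank k (H →ₗ[Rg k n] Xk k n) = r) : Module.rank k H = r := by
  have e1 : (H →ₗ[Rg k n] Xk k n) ≃ₗ[k] (H →ₗ[k] Xk k n) :=
    LinearEquiv.ofBijective (LinearMap.restrictScalarsₗ k (Rg k n) H (Xk k n) k)
      ⟨LinearMap.restrictScalars_injective k, fun f => ⟨toR hK Kil_X f, rfl⟩⟩
  obtain ⟨e2⟩ : Nonempty (Xk k n ≃ₗ[k] k) := nonempty_linearEquiv_of_rank_eq (by rw [rank_Xk, Module.rank_self])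
  have e3 : (H →ₗ[k] Xk k n) ≃ₗ[k] Module.Dual k H := LinearEquiv.congrRight e2
  rw [(e1.trans e3).rank_eq] at h
  have hf : Module.Finite k (Module.Dual k H) := by
    rw [← Module.rank_lt_aleph0_iff, h]
    exact Cardinal.natCast_lt_aleph0
  have hf' : Module.Finite k H := (Module.finite_dual_iff k).1 hf
  rw [← Module.finrank_eq_rank, Subspace.dual_finrank_eq, Module.finrank_eq_rank] at h
  exact h

lemma extX {B : Type} [AddCommGroup B] [Module (Rg k n) B] (hB : Kil k n B) (N : Submodule (Rg k n) B)
    (φ : N →ₗ[Rg k n] Xk k n) : ∃ ψ : B →ₗ[Rg k n] Xk k n, ∀ x : N, ψ x = φ x := by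
  let _ : Module k B := Module.compHom B (algebraMap k (Rg k n))
  have : IsScalarTower k (Rg k n) B := ⟨fun x y z => by
    change _ = algebraMap k (Rg k n) x • (y • z)
    rw [Algebra.smul_def, mul_smul]⟩
  obtain ⟨g, hg⟩ := LinearMap.exists_extend (p := N.restrictScalars k) (φ.restrictScalars k)
  refine ⟨toR hB Kil_X g, fun x => ?_⟩
  exact LinearMap.congr_fun hg x

lemma Kil_tensor (N : Type) [AddCommGroup N] [Module (Rg k n) N] : Kil k n (TensorProduct (Rg k n) (Xk k n) N) := by
  intro r hr x
  induction x using TensorProduct.induction_on with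
  | zero => exact smul_zero _
  | tmul x y => rw [TensorProduct.smul_tmul', smul_Xk r hr, TensorProduct.zero_tmul]
  | add x y hx hy => rw [smul_add, hx, hy, add_zero]

lemma Xk_mul (r : Rg k n) (x : Xk k n) : r • x = (Ideal.Quotient.mk (maxIdl k n) r) * x := by
  obtain ⟨x, rfl⟩ := Ideal.Quotient.mk_surjective x
  rfl

/-- `f ↦ (x ⊗ p ↦ x * f p)` -/
noncomputable def til (N : Type) [AddCommGroup N] [Module (Rg k n) N] :
    (N →ₗ[Rg k n] Xk k n) ≃ₗ[Rg k n] (TensorProduct (Rg k n) (Xk k n) N →ₗ[Rg k n] Xk k n) where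
  toFun f := LinearMap.mul' (Rg k n) (Xk k n) ∘ₗ f.lTensor (Xk k n)
  map_add' f g := by rw [LinearMap.lTensor_add, LinearMap.comp_add]
  map_smul' r f := by rw [LinearMap.lTensor_smul, LinearMap.comp_smul]; rfl
  invFun g := g ∘ₗ (TensorProduct.mk (Rg k n) (Xk k n) N 1)
  left_inv f := by
    ext x
    simp
  right_inv g := by
    ext x
    simp

lemma til_tmul {N : Type} [AddCommGroup N] [Module (Rg k n) N] (f : N →ₗ[Rg k n] Xk k n) (x : Xk k n) (y : N) :
    til N f (x ⊗ₜ[Rg k n] y) = x * f y := rfl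

lemma til_comp {N N' : Type} [AddCommGroup N] [Module (Rg k n) N] [AddCommGroup N'] [Module (Rg k n) N']
    (f : N →ₗ[Rg k n] Xk k n) (a : N' →ₗ[Rg k n] N) :
    til N' (f ∘ₗ a) = til N f ∘ₗ a.lTensor (Xk k n) := by
  apply TensorProduct.ext'
  intro x y
  rfl

lemma rank_two {Z U V : Type} [AddCommGroup Z] [Module k Z] [AddCommGroup U] [Module k U]
    [AddCommGroup V] [Module k V] (f : Z →ₗ[k] U) (g : Z →ₗ[k] V) (hf : Function.Surjective f)
    (hg : Function.Surjective g) (h : ∀ z, f z = 0 ↔ g z = 0) : Module.rank k U = Module.rank k V := by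
  have : LinearMap.ker f = LinearMap.ker g := by
    ext z
    exact h z
  rw [← (f.quotKerEquivOfSurjective hf).rank_eq, ← (g.quotKerEquivOfSurjective hg).rank_eq, this]

section
variable {A B C : Type} [AddCommGroup A] [Module (Rg k n) A] [AddCommGroup B] [Module (Rg k n) B]
  [AddCommGroup C] [Module (Rg k n) C] (a : A →ₗ[Rg k n] B) (b : B →ₗ[Rg k n] C)

noncomputable def Zc : Submodule (Rg k n) (B →ₗ[Rg k n] Xk k n) where
  carrier := {f | f ∘ₗ a = 0}
  zero_mem' := LinearMap.zero_comp _
  add_mem' {f g} hf hg := by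
    simp only [Set.mem_ofPred_eq] at *
    rw [LinearMap.add_comp, hf, hg, add_zero]
  smul_mem' r f hf := by
    simp only [Set.mem_ofPred_eq] at *
    rw [LinearMap.smul_comp, hf, smul_zero]


abbrev Hc (hab : ∀ x, a x ∈ LinearMap.ker b) : Type := LinearMap.ker b ⧸
  LinearMap.range (a.codRestrict _ hab)

noncomputable def ZH (hab : ∀ x, a x ∈ LinearMap.ker b) : Zc a →ₗ[Rg k n] (Hc a b hab →ₗ[Rg k n] Xk k n) where
  toFun f := Submodule.liftQ _ (f.1 ∘ₗ (LinearMap.ker b).subtype) (by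
    rintro _ ⟨x, rfl⟩
    have h : f.1 ∘ₗ a = 0 := f.2
    exact (LinearMap.congr_fun h x))
  map_add' f g := by
    apply Submodule.linearMap_qext
    rfl
  map_smul' r f := by
    apply Submodule.linearMap_qext
    rfl

lemma ZH_surj (hB : Kil k n B) (hab : ∀ x, a x ∈ LinearMap.ker b) : Function.Surjective (ZH a b hab) := by
  intro φ
  obtain ⟨ψ, hψ⟩ := extX hB (LinearMap.ker b) (φ ∘ₗ Submodule.mkQ _)
  have hz : ψ ∈ Zc a := by
    change _ ∘ₗ a = 0
    refine LinearMap.ext fun y => ?_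
    have := hψ ⟨_, hab y⟩
    refine this.trans ?_
    have h0 : (LinearMap.range (a.codRestrict _ hab)).mkQ ⟨_, hab y⟩ = 0 :=
      (Submodule.Quotient.mk_eq_zero _).2 ⟨y, rfl⟩
    rw [LinearMap.comp_apply, h0, map_zero]
    rfl
  refine ⟨⟨_, hz⟩, ?_⟩
  apply Submodule.linearMap_qext
  refine LinearMap.ext fun x => ?_
  exact hψ x

lemma ZH_ker (hC : Kil k n C) (hab : ∀ x, a x ∈ LinearMap.ker b) (f : Zc a) :
    ZH a b hab f = 0 ↔ ∃ g : C →ₗ[Rg k n] Xk k n, g ∘ₗ b = f.1 := by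
  constructor
  · intro h
    have hv : LinearMap.ker b.rangeRestrict ≤ LinearMap.ker f.1 := by
      intro x hx
      rw [LinearMap.ker_rangeRestrict] at hx
      exact LinearMap.congr_fun h (Submodule.Quotient.mk ⟨x, hx⟩)
    let φ : LinearMap.range b →ₗ[Rg k n] Xk k n :=
      (Submodule.liftQ _ f.1 hv) ∘ₗ (b.rangeRestrict.quotKerEquivOfSurjective
        (LinearMap.surjective_rangeRestrict _)).symm.toLinearMap
    obtain ⟨ψ, hψ⟩ := extX hC _ φ
    refine ⟨ψ, ?_⟩
    refine LinearMap.ext fun x => ?_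
    refine (hψ (b.rangeRestrict x)).trans ?_
    change Submodule.liftQ _ f.1 hv (LinearEquiv.symm _ _) = _
    have : (b.rangeRestrict.quotKerEquivOfSurjective
        (LinearMap.surjective_rangeRestrict _)).symm (b.rangeRestrict x) = Submodule.Quotient.mk x := by
      rw [LinearEquiv.symm_apply_eq]
      rfl
    rw [this]
    rfl
  · rintro ⟨g, hg⟩
    apply Submodule.linearMap_qext
    refine LinearMap.ext fun x => ?_
    change f.1 x = 0
    rw [← hg, LinearMap.comp_apply, x.2, map_zero]

lemma rankH {TA TB TC V Hh : Type} [AddCommGroup TA] [Module (Rg k n) TA] [AddCommGroup TB] [Module (Rg k n) TB]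
    [AddCommGroup TC] [Module (Rg k n) TC] [AddCommGroup V] [Module (Rg k n) V]
    [Module k V] [IsScalarTower k (Rg k n) V]
    [AddCommGroup Hh] [Module (Rg k n) Hh] [Module k Hh] [IsScalarTower k (Rg k n) Hh]
    (α : TA →ₗ[Rg k n] TB) (β : TB →ₗ[Rg k n] TC) (hab : ∀ x, α x ∈ LinearMap.ker β)
    (hB : Kil k n TB) (hC : Kil k n TC)
    (tA : (A →ₗ[Rg k n] Xk k n) ≃ₗ[Rg k n] (TA →ₗ[Rg k n] Xk k n))
    (tB : (B →ₗ[Rg k n] Xk k n) ≃ₗ[Rg k n] (TB →ₗ[Rg k n] Xk k n))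
    (tC : (C →ₗ[Rg k n] Xk k n) ≃ₗ[Rg k n] (TC →ₗ[Rg k n] Xk k n))
    (h1 : ∀ f, tA (f ∘ₗ a) = tB f ∘ₗ α) (h2 : ∀ f, tB (f ∘ₗ b) = tC f ∘ₗ β)
    (Θ : Zc a →ₗ[Rg k n] V) (hΘ : Function.Surjective Θ)
    (hk : ∀ f, Θ f = 0 ↔ ∃ g : C →ₗ[Rg k n] Xk k n, g ∘ₗ b = f.1)
    (e : Hh ≃ₗ[Rg k n] Hc α β hab) {r : ℕ} (hr : Module.rank k V = r) : Module.rank k Hh = r := by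
  let tz : Zc a →ₗ[Rg k n] Zc α := (tB.toLinearMap ∘ₗ (Zc a).subtype).codRestrict (Zc α) (by
    intro f
    change tB f.1 ∘ₗ α = 0
    have h : f.1 ∘ₗ a = 0 := f.2
    rw [← h1, h, map_zero])
  have hts : Function.Surjective tz := by
    rintro ⟨f, hf⟩
    refine ⟨⟨tB.symm f, ?_⟩, ?_⟩
    · change _ ∘ₗ a = 0
      apply tA.injective
      rw [h1, LinearEquiv.apply_symm_apply, map_zero]
      exact hf
    · apply Subtype.ext
      exact LinearEquiv.apply_symm_apply _ _
  let Φ : Zc a →ₗ[Rg k n] (Hh →ₗ[Rg k n] Xk k n) := (e.congrLeft (Xk k n) (Rg k n)).symm.toLinearMap ∘ₗ (ZH α β hab) ∘ₗ tz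
  have hΦ : Function.Surjective Φ :=
    ((e.congrLeft (Xk k n) (Rg k n)).symm.surjective).comp ((ZH_surj α β hB hab).comp hts)
  have hker : ∀ z, Θ z = 0 ↔ Φ z = 0 := by
    intro z
    change _ ↔ (e.congrLeft (Xk k n) (Rg k n)).symm (ZH α β hab (tz z)) = 0
    rw [LinearEquiv.map_eq_zero_iff, ZH_ker α β hC hab, hk]
    constructor
    · rintro ⟨g, hg⟩
      refine ⟨tC g, ?_⟩
      rw [← h2, hg]
      rfl
    · rintro ⟨g, hg⟩
      refine ⟨tC.symm g, ?_⟩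
      apply tB.injective
      rw [h2, LinearEquiv.apply_symm_apply, hg]
      rfl
  have hK : Kil k n Hh := by
    intro s hs x
    apply e.injective
    rw [map_smul, map_zero]
    obtain ⟨y, hy⟩ := Submodule.Quotient.mk_surjective _ (e x)
    rw [← hy, ← Submodule.Quotient.mk_smul]
    have : s • y = 0 := Subtype.ext (hB s hs y)
    rw [this, Submodule.Quotient.mk_zero]
  refine rank_of_hom hK ?_
  rw [← hr]
  have := rank_two (k := k) (Z := Zc a) (U := V) (V := Hh →ₗ[Rg k n] Xk k n)
    (Θ.restrictScalars k) (Φ.restrictScalars k) hΘ hΦ hker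
  exact this.symm

end
end
end BC

namespace BC

section
variable {k : Type} [Field k] {n : ℕ}
variable {M : Type} [AddCommGroup M] [Module (Rg k n) M]

noncomputable def thF (P : ProjectiveResolution (ModuleCat.of (Rg k n) M)) (i : ℕ)
    (f : P.complex.X i →ₗ[Rg k n] Xk k n) (hf : f ∘ₗ (P.complex.d (i+1) i).hom = 0) : EX k n i M :=
  P.extMk (Y := ModuleCat.of (Rg k n) (Xk k n)) (ModuleCat.ofHom f) (i+1) rfl
    (ModuleCat.hom_ext hf)

lemma thF_add (P : ProjectiveResolution (ModuleCat.of (Rg k n) M)) (i : ℕ)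
    (f g : P.complex.X i →ₗ[Rg k n] Xk k n) (hf : f ∘ₗ (P.complex.d (i+1) i).hom = 0)
    (hg : g ∘ₗ (P.complex.d (i+1) i).hom = 0) (hfg : (f + g) ∘ₗ (P.complex.d (i+1) i).hom = 0) :
    thF P i (f + g) hfg = thF P i f hf + thF P i g hg := by
  unfold thF
  rw [P.add_extMk]
  rfl

lemma thF_smul (P : ProjectiveResolution (ModuleCat.of (Rg k n) M)) (i : ℕ) (r : Rg k n)
    (f : P.complex.X i →ₗ[Rg k n] Xk k n) (hf : f ∘ₗ (P.complex.d (i+1) i).hom = 0)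
    (hfg : (r • f) ∘ₗ (P.complex.d (i+1) i).hom = 0) :
    thF P i (r • f) hfg = r • thF P i f hf := by
  rw [Abelian.Ext.smul_eq_comp_mk₀ (R := Rg k n) (C := ModuleCat (Rg k n))]
  unfold thF
  rw [P.extMk_comp_mk₀]
  rfl

noncomputable def Th (P : ProjectiveResolution (ModuleCat.of (Rg k n) M)) (i : ℕ) :
    Zc (P.complex.d (i+1) i).hom →ₗ[Rg k n] E k n i M where
  toFun f := thF P i f.1 f.2
  map_add' f g := thF_add P i f.1 g.1 f.2 g.2 (f + g).2
  map_smul' r f := thF_smul P i r f.1 f.2 (r • f).2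

lemma RS_lift {H : Type} [AddCommGroup H] [Module (Rg k n) H] {r : ℕ}
    (h : ∀ [Module k H] [IsScalarTower k (Rg k n) H], Module.rank k H = r) :
    Module.rank k (RestrictScalars k (Rg k n) H) = r := by
  let _ : Module k H := Module.compHom H (algebraMap k (Rg k n))
  have : IsScalarTower k (Rg k n) H := ⟨fun x y z => by
    change _ = algebraMap k (Rg k n) x • (y • z)
    rw [Algebra.smul_def, mul_smul]⟩
  rw [← h]
  exact LinearEquiv.rank_eq
    { RestrictScalars.addEquiv k (Rg k n) H with
      map_smul' := fun c x => rfl }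

lemma Th_surj (P : ProjectiveResolution (ModuleCat.of (Rg k n) M)) (i : ℕ) :
    Function.Surjective (Th P i) := by
  intro (x : EX k n i M)
  obtain ⟨f, hf, h⟩ := P.extMk_surjective x (i+1) rfl
  exact ⟨⟨f.hom, congrArg ModuleCat.Hom.hom hf⟩, h⟩

lemma Th_ker (P : ProjectiveResolution (ModuleCat.of (Rg k n) M)) (i : ℕ) (f) :
    Th P (i+1) f = 0 ↔ ∃ g : P.complex.X i →ₗ[Rg k n] Xk k n, g ∘ₗ (P.complex.d (i+1) i).hom = f.1 := by
  have h0 : P.complex.d (i+2) (i+1) ≫ ModuleCat.ofHom f.1 = 0 := by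
      apply ModuleCat.hom_ext
      exact f.2
  refine (P.extMk_eq_zero_iff (Y := ModuleCat.of (Rg k n) (Xk k n)) (ModuleCat.ofHom f.1) (i+2) rfl h0 i rfl).trans ?_
  constructor
  · rintro ⟨g, hg⟩
    exact ⟨g.hom, congrArg ModuleCat.Hom.hom hg⟩
  · rintro ⟨g, hg⟩
    exact ⟨ModuleCat.ofHom g, ModuleCat.hom_ext hg⟩

lemma betti_succ {i r : ℕ} (h : Hb k n (i+1) M r) : betti k n (ModuleCat.of (Rg k n) M) (i+1) = r := by
  let P := projectiveResolution (ModuleCat.of (Rg k n) M)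
  let F := (MonoidalCategory.tensoringLeft (ModuleCat.{0} (Rg k n))).obj (ModuleCat.of (Rg k n) (Xk k n))
  let K := (F.mapHomologicalComplex (ComplexShape.down ℕ)).obj P.complex
  let S := K.sc' (i+2) (i+1) i
  let e : ((Tor (ModuleCat (Rg k n)) (i+1)).obj (ModuleCat.of (Rg k n) (Xk k n))).obj (ModuleCat.of (Rg k n) M) ≅
      S.moduleCatLeftHomologyData.H :=
    P.isoLeftDerivedObj F (i+1) ≪≫ K.homologyIsoSc' (i+2) (i+1) i (by simp) (by simp) ≪≫ S.moduleCatHomologyIso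
  have e' := e.toLinearEquiv
  refine RS_lift ?_
  intro _ _
  refine rankH (k := k) (n := n) (P.complex.d (i+2) (i+1)).hom (P.complex.d (i+1) i).hom
    (TA := S.X₁) (TB := S.X₂) (TC := S.X₃) S.f.hom S.g.hom
    (fun x => ?_) ?_ ?_ (til _) (til _) (til _)
    (fun f => til_comp f _) (fun f => til_comp f _) (Th P (i+1)) (Th_surj P _) (Th_ker P i) e' h
  · exact congrArg (fun q => q.hom x) S.zero
  · exact Kil_tensor (P.complex.X (i+1))
  · exact Kil_tensor (P.complex.X i)
 
lemma betti_zero {r : ℕ} (h : Hb k n 0 M r) : betti k n (ModuleCat.of (Rg k n) M) 0 = r := by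
  let F := (MonoidalCategory.tensoringLeft (ModuleCat.{0} (Rg k n))).obj (ModuleCat.of (Rg k n) (Xk k n))
  have : Limits.PreservesFiniteColimits F :=
    inferInstanceAs (Limits.PreservesFiniteColimits (MonoidalCategory.tensorLeft (ModuleCat.of (Rg k n) (Xk k n))))
  let e : ((Tor (ModuleCat (Rg k n)) 0).obj (ModuleCat.of (Rg k n) (Xk k n))).obj (ModuleCat.of (Rg k n) M) ≅
      ModuleCat.of (Rg k n) (TensorProduct (Rg k n) (Xk k n) M) :=
    F.leftDerivedZeroIsoSelf.app _
  let e' := e.toLinearEquiv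
  refine RS_lift ?_
  intro _ _
  refine rank_of_hom (n := n) ?_ ?_
  · intro s hs x
    apply e'.injective
    rw [map_smul, map_zero]
    exact Kil_tensor M s hs _
  · rw [← show _ = (r : Cardinal) from h]
    refine LinearEquiv.rank_eq (LinearEquiv.restrictScalars k (S := Rg k n) ?_)
    exact (e'.congrLeft (Xk k n) (Rg k n)).trans ((til M).symm.trans E0equiv.symm)

end
end BC

/-- Betti numbers of `k[Δ(d,m)]` for `d ≥ 3` odd, `d + 1 < m`, `a = (d+1)/2` (Terai–Hibi):
for `M = k[x_1,…,x_m]/(I_{a,2,m−1} + x_1x_m·I_{a−1,3,m−2})` one has `b_0(M) = 1`,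
`b_{m−d}(M) = 1`, `b_i(M) = 0` for `i > m−d`, and `b_i(M) = η(d, m, i) + η(d, m, m−d−i)`
for `1 ≤ i ≤ m−d−1`. -/
theorem betti_cyclic_odd (k : Type) [Field k] (d m : ℕ)
    (hd : Odd d) (hd3 : 3 ≤ d) (hm : d + 1 < m) (a : ℕ) (ha : a = (d + 1) / 2)
    (M : ModuleCat (MvPolynomial (Fin m) k))
    (hM : M = ModuleCat.of (MvPolynomial (Fin m) k)
      (MvPolynomial (Fin m) k ⧸ (idealI k m a 2 (m - 1) +
        Ideal.span {Xv k m 1 * Xv k m m} * idealI k m (a - 1) 3 (m - 2)))) :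
    betti k m M 0 = 1 ∧
    betti k m M (m - d) = 1 ∧
    (∀ i, m - d < i → betti k m M i = 0) ∧
    (∀ i, 1 ≤ i → i ≤ m - d - 1 →
      betti k m M i = ((eta d m i + eta d m (m - d - i) : ℕ) : Cardinal)) := by
  obtain ⟨b', hb'⟩ := hd
  obtain ⟨b, rfl⟩ : ∃ b, b' = b + 1 := ⟨b' - 1, by omega⟩
  obtain ⟨c, hc⟩ : ∃ c, m = 2 * (b + 1) + c + 3 := ⟨m - (2 * (b + 1) + 3), by omega⟩
  obtain ⟨s, hs⟩ : ∃ s, s = 2 * (b + 1) + c + 1 := ⟨_, rfl⟩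
  have hms : m = s + 2 := by omega
  have hab : a = b + 2 := by omega
  subst hb' hab hms
  have e1 : s + 2 - 1 = s + 1 := by omega
  have e2 : b + 2 - 1 = b + 1 := by omega
  have e3 : s + 2 - 2 = s := by omega
  rw [e1, e2, e3, BC.ideal_main] at hM
  subst hM
  obtain ⟨h0, h1⟩ := BC.IU_res (k := k) (b + 1) c s hs
  have hmd : s + 2 - (2 * (b + 1) + 1) = c + 2 := by omega
  refine ⟨?_, ?_, ?_, ?_⟩
  · simpa using BC.betti_zero h0
  · rw [hmd]
    refine (BC.betti_succ (h1 (c + 1))).trans ?_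
    have : BC.wt (b + 1) c (c + 1) + BC.rp (b + 1) (c + 1) (c + 1 + 1) = 1 := by
      have hz : Nat.choose (b + 1 + (c + 1)) (b + 1 + (c + 1 + 1)) = 0 := Nat.choose_eq_zero_of_lt (by omega)
      simp [BC.wt, BC.rp, hz]
    rw [this, Nat.cast_one]
  · intro i hi
    obtain ⟨j, rfl⟩ : ∃ j, i = j + 1 := ⟨i - 1, by omega⟩
    refine (BC.betti_succ (h1 j)).trans ?_
    have : BC.wt (b + 1) c j + BC.rp (b + 1) (c + 1) (j + 1) = 0 := by
      have hz : Nat.choose (b + 1 + (c + 1)) (b + 1 + (j + 1)) = 0 := Nat.choose_eq_zero_of_lt (by omega)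
      have h1 : ¬ j ≤ c := by omega
      have h2 : ¬ j = c + 1 := by omega
      simp [BC.wt, BC.rp, hz, h1, h2]
    rw [this, Nat.cast_zero]
  · intro i hi1 hi2
    obtain ⟨j, rfl⟩ : ∃ j, i = j + 1 := ⟨i - 1, by omega⟩
    refine (BC.betti_succ (h1 j)).trans ?_
    rw [BC.eta_id (b + 1) c j (by omega)]
    have hc' : s + 2 = 2 * (b + 1) + c + 3 := by omega
    rw [hc']
end

section
/- Let k be a field, d an odd integer with d ≥ 3, and m an integer with d+1 < m; set a = (d+1)/2. Let M = k[x_1,…,x_m]/(I_{a,2,m−1} + x_1x_m·I_{a−1,3,m−2}) (the Stanley–Reisner ring k[Δ(d,m)]) and N = k[x_1,…,x_{m−1}]/(I_{a,1,m−2} + I_{a,2,m−1}) (the Stanley–Reisner ring k[Δ(d−1,m−1)]). Then for every i ≥ 0, the i-th Betti number of M over k[x_1,…,x_m] equals the i-th Betti number of N over k[x_1,…,x_{m−1}]: dim_k Tor_i^{k[x_1,…,x_m]}(k, M) = dim_k Tor_i^{k[x_1,…,x_{m−1}]}(k, N). -/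
open CategoryTheory

set_option synthInstance.maxHeartbeats 1000000
set_option maxHeartbeats 1000000

open MonoidalCategory in
noncomputable def bcIso {S R : Type} [CommRing S] [CommRing R] (f : S →+* R) (A : ModuleCat.{0} R) :
    ModuleCat.extendScalars.{0,0,0} f ⋙ (tensoringLeft (ModuleCat R)).obj A ⋙ ModuleCat.restrictScalars f ≅
      (tensoringLeft (ModuleCat S)).obj ((ModuleCat.restrictScalars f).obj A) :=
  letI : Algebra S R := f.toAlgebra
  letI : Module S A := Module.compHom A f
  haveI : IsScalarTower S R A := ⟨fun s r a => by
    change (f s * r) • a = f s • (r • a); rw [mul_smul]⟩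
  NatIso.ofComponents
   (fun P => LinearEquiv.toModuleIso (X₁ := ((ModuleCat.extendScalars.{0,0,0} f ⋙ (tensoringLeft (ModuleCat R)).obj A ⋙ ModuleCat.restrictScalars f).obj P)) (X₂ := (((tensoringLeft (ModuleCat S)).obj ((ModuleCat.restrictScalars f).obj A)).obj P))
      ((TensorProduct.AlgebraTensorModule.cancelBaseChange S R R A P).restrictScalars S))
   (fun {P Q} g => by
      refine ModuleCat.hom_ext (LinearMap.ext fun x => ?_)
      exact (LinearMap.congr_fun (TensorProduct.AlgebraTensorModule.lTensor_comp_cancelBaseChange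
        S R R (M := A) g.hom) x).symm)

theorem tor_bc {S R : Type} [CommRing S] [CommRing R] (f : S →+* R) (hf : f.Flat)
    (A : ModuleCat.{0} R) (N : ModuleCat.{0} S) (i : ℕ) :
    Nonempty ((ModuleCat.restrictScalars f).obj (((Tor (ModuleCat R) i).obj A).obj
        ((ModuleCat.extendScalars f).obj N)) ≅
      ((Tor (ModuleCat S) i).obj ((ModuleCat.restrictScalars f).obj A)).obj N) := by
  have adj := ModuleCat.extendRestrictScalarsAdj.{0,0,0} f
  have : Limits.PreservesFiniteLimits (ModuleCat.extendScalars.{0,0,0} f) :=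
    ModuleCat.preservesFiniteLimits_extendScalars_of_flat hf
  have : (ModuleCat.extendScalars.{0,0,0} f).IsLeftAdjoint := adj.isLeftAdjoint
  have : Limits.PreservesFiniteColimits (ModuleCat.extendScalars.{0,0,0} f) := inferInstance
  have : (ModuleCat.extendScalars.{0,0,0} f).Additive := Functor.additive_of_preserves_binary_products _
  have : (ModuleCat.extendScalars.{0,0,0} f).PreservesProjectiveObjects :=
    ⟨fun {P} hP => adj.map_projective P hP⟩
  let P := ProjectiveResolution.of N
  let Q := (ModuleCat.extendScalars.{0,0,0} f).mapProjectiveResolution P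
  have e1 := (ModuleCat.restrictScalars.{0} f).mapIso (Q.isoLeftDerivedObj ((MonoidalCategory.tensoringLeft (ModuleCat R)).obj A) i)
  have e2 := P.isoLeftDerivedObj ((MonoidalCategory.tensoringLeft (ModuleCat S)).obj ((ModuleCat.restrictScalars f).obj A)) i
  refine ⟨e1 ≪≫ ?_ ≪≫ e2.symm⟩
  let K := ((MonoidalCategory.tensoringLeft (ModuleCat R)).obj A).mapHomologicalComplex (ComplexShape.down ℕ) |>.obj Q.complex
  refine (ShortComplex.mapHomologyIso (K.sc i) (ModuleCat.restrictScalars f)).symm ≪≫ ?_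
  let e3 := (NatIso.mapHomologicalComplex (bcIso f A) (ComplexShape.down ℕ)).app P.complex
  exact (HomologicalComplex.homologyFunctor _ _ i).mapIso e3

theorem rank_bc {k S R : Type} [Field k] [CommRing S] [CommRing R] [Algebra k S] [Algebra k R]
    (f : S →ₐ[k] R) (X : ModuleCat.{0} R) (Y : ModuleCat.{0} S)
    (e : (ModuleCat.restrictScalars f.toRingHom).obj X ≅ Y) :
    Module.rank k (RestrictScalars k R X) = Module.rank k (RestrictScalars k S Y) := by
  let l := e.toLinearEquiv
  have hl : ∀ (s : S) (x : X), l (show X from f s • x) = s • l x := fun s x => l.map_smul s x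
  refine LinearEquiv.rank_eq
    { toFun := fun x => (RestrictScalars.addEquiv k S Y).symm (l (RestrictScalars.addEquiv k R X x))
      invFun := fun x => (RestrictScalars.addEquiv k R X).symm
        (l.symm (RestrictScalars.addEquiv k S Y x))
      map_add' := fun x y => l.map_add _ _
      map_smul' := fun c x => ?_
      left_inv := fun x => l.symm_apply_apply x
      right_inv := fun x => l.apply_symm_apply x }
  simp only [RingHom.id_apply]
  apply (RestrictScalars.addEquiv k S Y).injective
  rw [AddEquiv.apply_symm_apply, RestrictScalars.addEquiv_map_smul,
    RestrictScalars.addEquiv_map_smul, AddEquiv.apply_symm_apply, ← hl, f.commutes]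

/-- The map `x_1 ↦ x_1 x_{n+1}`, `x_i ↦ x_i`. -/
noncomputable def phi (k : Type) [Field k] (p : ℕ) :
    MvPolynomial (Fin (p + 1)) k →ₐ[k] MvPolynomial (Fin (p + 2)) k :=
  MvPolynomial.aeval (Fin.cases (MvPolynomial.X 0 * MvPolynomial.X (Fin.last (p + 1)))
    (fun i => MvPolynomial.X i.succ.castSucc))

noncomputable def expEquiv (p : ℕ) : (Σ _ : ℤ, (Fin (p + 1) →₀ ℕ)) ≃ (Fin (p + 2) →₀ ℕ) where
  toFun zs := Finsupp.equivFunOnFinite.symm (fun j : Fin (p + 2) =>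
    if j.val = 0 then zs.2 0 + zs.1.toNat else
      if h : j.val = p + 1 then zs.2 0 + (-zs.1).toNat else zs.2 ⟨j.val, by omega⟩)
  invFun t := ⟨(t 0 : ℤ) - t (Fin.last (p + 1)), Finsupp.equivFunOnFinite.symm
    (fun i : Fin (p + 1) => if i.val = 0 then min (t 0) (t (Fin.last (p + 1))) else t i.castSucc)⟩
  left_inv := by
    rintro ⟨z, s⟩
    have h2 : min (s 0 + z.toNat) (s 0 + (-z).toNat) = s 0 := by omega
    refine Sigma.ext (by simp) (heq_of_eq ?_)
    ext i
    by_cases hi : i.val = 0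
    · obtain rfl : i = 0 := Fin.ext hi
      simpa using h2
    · have : i.val ≠ p + 1 := by omega
      have hi' : i ≠ 0 := fun h => hi (by simp [h])
      simp [hi', this]
  right_inv := by
    intro t
    ext j
    by_cases hj : j.val = 0
    · obtain rfl : j = 0 := Fin.ext hj
      simp; omega
    · by_cases hj2 : j.val = p + 1
      · obtain rfl : j = Fin.last (p + 1) := Fin.ext hj2
        simp; omega
      · have hj' : j ≠ 0 := fun h => hj (by simp [h])
        simp [hj', hj2]

noncomputable def bz (k : Type) [Field k] (p : ℕ) (z : ℤ) : MvPolynomial (Fin (p + 2)) k :=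
  MvPolynomial.X 0 ^ z.toNat * MvPolynomial.X (Fin.last (p + 1)) ^ (-z).toNat

theorem phi_monomial (k : Type) [Field k] (p : ℕ) (z : ℤ) (s : Fin (p + 1) →₀ ℕ) :
    phi k p (MvPolynomial.monomial s 1) * bz k p z =
      MvPolynomial.monomial (expEquiv p ⟨z, s⟩) 1 := by
  rw [MvPolynomial.monomial_eq (s := expEquiv p ⟨z, s⟩), phi, MvPolynomial.aeval_monomial,
    Finsupp.prod_fintype _ _ (by simp), Finsupp.prod_fintype _ _ (by simp),
    Fin.prod_univ_succ, Fin.prod_univ_castSucc (n := p + 1), Fin.prod_univ_succ (n := p)]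
  simp [expEquiv, bz, Fin.succ]
  have h3 : ∀ x : Fin p, x.val ≠ p := fun x => by omega
  simp only [h3, dite_false]
  rw [mul_pow, pow_add, pow_add]
  ring

theorem phi_flat (k : Type) [Field k] (p : ℕ) : (phi k p).toRingHom.Flat := by
  let _ : Algebra (MvPolynomial (Fin (p + 1)) k) (MvPolynomial (Fin (p + 2)) k) :=
    (phi k p).toRingHom.toAlgebra
  change Module.Flat _ _
  let L := Finsupp.linearCombination (MvPolynomial (Fin (p + 1)) k) (bz k p)
  let E : (ℤ →₀ MvPolynomial (Fin (p + 1)) k) ≃ₗ[k] MvPolynomial (Fin (p + 2)) k :=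
    (Finsupp.basis (fun _ : ℤ => MvPolynomial.basisMonomials (Fin (p + 1)) k)).equiv
      (MvPolynomial.basisMonomials (Fin (p + 2)) k) (expEquiv p)
  have hs : ∀ (s : MvPolynomial (Fin (p + 1)) k) (r : MvPolynomial (Fin (p + 2)) k),
    s • r = phi k p s * r := fun _ _ => rfl
  have tower : IsScalarTower k (MvPolynomial (Fin (p + 1)) k) (MvPolynomial (Fin (p + 2)) k) :=
    ⟨fun c s r => by rw [hs, hs, map_smul, smul_mul_assoc]⟩
  have hLE : L.restrictScalars k = E.toLinearMap := by
    refine (Finsupp.basis (fun _ : ℤ => MvPolynomial.basisMonomials (Fin (p + 1)) k)).ext ?_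
    rintro ⟨z, s⟩
    rw [LinearEquiv.coe_coe, Module.Basis.equiv_apply]
    simp only [Finsupp.coe_basis, MvPolynomial.coe_basisMonomials, LinearMap.restrictScalars_apply,
      L, Finsupp.linearCombination_single]
    rw [hs, phi_monomial]
  have hb : Function.Bijective L := by
    have : (L : _ → _) = E := funext fun x => LinearMap.congr_fun hLE x
    rw [this]; exact E.bijective
  have : Module.Free (MvPolynomial (Fin (p + 1)) k) (MvPolynomial (Fin (p + 2)) k) :=
    Module.Free.of_equiv (LinearEquiv.ofBijective L hb)
  infer_instance

theorem mem_maxIdl (k : Type) [Field k] (n : ℕ) (x : MvPolynomial (Fin n) k) :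
    x ∈ maxIdl k n ↔ MvPolynomial.constantCoeff x = 0 := by
  rw [maxIdl, ← Set.image_univ, MvPolynomial.mem_ideal_span_X_image]
  constructor
  · intro h
    by_contra h0
    obtain ⟨i, -, hi⟩ := h 0 (by exact MvPolynomial.mem_support_iff.2 h0)
    simp at hi
  · intro h m hm
    by_contra! hc
    have : m = 0 := by ext i; simpa using hc i
    subst this
    exact (MvPolynomial.mem_support_iff.1 hm) h

theorem cc_phi (k : Type) [Field k] (p : ℕ) (s : MvPolynomial (Fin (p + 1)) k) :
    MvPolynomial.constantCoeff (phi k p s) = MvPolynomial.constantCoeff s := by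
  have : (MvPolynomial.constantCoeff.comp (phi k p).toRingHom) =
      (MvPolynomial.constantCoeff : MvPolynomial (Fin (p + 1)) k →+* k) := by
    apply MvPolynomial.ringHom_ext
    · intro r; simp [phi]
    · intro i
      refine Fin.cases ?_ (fun i => ?_) i <;> simp [phi]
  exact RingHom.congr_fun this s

theorem resIso (k : Type) [Field k] (p : ℕ) :
    Nonempty ((ModuleCat.restrictScalars (phi k p).toRingHom).obj
      (ModuleCat.of (MvPolynomial (Fin (p + 2)) k)
        (MvPolynomial (Fin (p + 2)) k ⧸ maxIdl k (p + 2))) ≅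
      ModuleCat.of (MvPolynomial (Fin (p + 1)) k)
        (MvPolynomial (Fin (p + 1)) k ⧸ maxIdl k (p + 1))) := by
  let X := (ModuleCat.restrictScalars (phi k p).toRingHom).obj
      (ModuleCat.of (MvPolynomial (Fin (p + 2)) k)
        (MvPolynomial (Fin (p + 2)) k ⧸ maxIdl k (p + 2)))
  let l : MvPolynomial (Fin (p + 1)) k →ₗ[MvPolynomial (Fin (p + 1)) k] X :=
    LinearMap.toSpanSingleton _ X (Ideal.Quotient.mk (maxIdl k (p + 2)) 1)
  have hl : ∀ s, l s = Ideal.Quotient.mk (maxIdl k (p + 2)) (phi k p s) := by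
    intro s
    change Ideal.Quotient.mk (maxIdl k (p + 2)) (phi k p s * 1) = _
    rw [mul_one]
  have hk : LinearMap.ker l = maxIdl k (p + 1) := by
    ext s
    rw [LinearMap.mem_ker, hl, mem_maxIdl, ← cc_phi, ← mem_maxIdl]
    exact Ideal.Quotient.eq_zero_iff_mem
  have hsj : Function.Surjective l := by
    intro x
    obtain ⟨r, rfl⟩ := Ideal.Quotient.mk_surjective (I := maxIdl k (p + 2)) x
    refine ⟨MvPolynomial.C (MvPolynomial.constantCoeff r), ?_⟩
    rw [hl]
    refine Ideal.Quotient.eq.2 ?_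
    rw [mem_maxIdl, map_sub, cc_phi]
    simp
  exact ⟨((Submodule.quotEquivOfEq _ _ hk.symm).trans
    (l.quotKerEquivOfSurjective hsj)).symm.toModuleIso⟩

theorem extIso {S R : Type} [CommRing S] [CommRing R] (f : S →+* R) (J : Ideal S) :
    Nonempty (ModuleCat.of R (R ⧸ J.map f) ≅
      (ModuleCat.extendScalars.{0,0,0} f).obj (ModuleCat.of S (S ⧸ J))) := by
  let _ : Algebra S R := f.toAlgebra
  exact ⟨LinearEquiv.toModuleIso (X₂ := (ModuleCat.extendScalars.{0,0,0} f).obj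
    (ModuleCat.of S (S ⧸ J))) (Ideal.qoutMapEquivTensorQout R (I := J))⟩

theorem betti_phi (k : Type) [Field k] (p : ℕ) (J : Ideal (MvPolynomial (Fin (p + 1)) k)) (i : ℕ) :
    betti k (p + 2) (ModuleCat.of _ (MvPolynomial (Fin (p + 2)) k ⧸ J.map (phi k p).toRingHom)) i =
    betti k (p + 1) (ModuleCat.of _ (MvPolynomial (Fin (p + 1)) k ⧸ J)) i := by
  obtain ⟨e1⟩ := extIso (phi k p).toRingHom J
  obtain ⟨e2⟩ := resIso k p
  obtain ⟨e3⟩ := tor_bc (phi k p).toRingHom (phi_flat k p) (ModuleCat.of _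
        (MvPolynomial (Fin (p + 2)) k ⧸ maxIdl k (p + 2)))
        (ModuleCat.of _ (MvPolynomial (Fin (p + 1)) k ⧸ J)) i
  exact rank_bc (phi k p) _ _ ((ModuleCat.restrictScalars _).mapIso
    (((Tor (ModuleCat (MvPolynomial (Fin (p + 2)) k)) i).obj _).mapIso e1) ≪≫ e3 ≪≫
    ((Tor (ModuleCat (MvPolynomial (Fin (p + 1)) k)) i).mapIso e2).app _)

theorem phi_Xv_one (k : Type) [Field k] (p : ℕ) :
    phi k p (Xv k (p + 1) 1) = Xv k (p + 2) 1 * Xv k (p + 2) (p + 2) := by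
  simp [Xv, phi]
  rfl

theorem phi_Xv (k : Type) [Field k] (p t : ℕ) (h : 2 ≤ t) (h' : t ≤ p + 1) :
    phi k p (Xv k (p + 1) t) = Xv k (p + 2) t := by
  obtain ⟨u, rfl⟩ := Nat.exists_eq_add_of_le' h
  have h1 : (⟨u + 2 - 1, by omega⟩ : Fin (p + 1)) = Fin.succ ⟨u, by omega⟩ := rfl
  rw [Xv, Xv, dif_pos (by omega), dif_pos (by omega), h1, phi, MvPolynomial.aeval_X]
  rfl

theorem t_bounds {a p q : ℕ} {t : ℕ → ℕ} (h0 : p ≤ t 0) (h1 : t (a - 1) ≤ q)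
    (h2 : ∀ j, j + 1 < a → t j + 2 ≤ t (j + 1)) (j : ℕ) (hj : j < a) : p ≤ t j ∧ t j ≤ q := by
  constructor
  · induction j with
    | zero => exact h0
    | succ j ih => have := ih (by omega); have := h2 j hj; omega
  · have : ∀ l, j + l < a → t j ≤ t (j + l) := by
      intro l
      induction l with
      | zero => intro _; exact le_rfl
      | succ l ih => intro h; have := ih (by omega); have := h2 (j + l) h; rw [← add_assoc]; omega
    have := this (a - 1 - j) (by omega)
    rw [show j + (a - 1 - j) = a - 1 by omega] at this
    omega

theorem map_idealI (k : Type) [Field k] (n a p q : ℕ) (hp : 2 ≤ p) (hq : q ≤ n + 1) :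
    (idealI k (n + 1) a p q).map (phi k n).toRingHom = idealI k (n + 2) a p q := by
  rw [idealI, idealI, Ideal.map_span]
  have key : ∀ t : ℕ → ℕ, p ≤ t 0 → t (a - 1) ≤ q → (∀ j, j + 1 < a → t j + 2 ≤ t (j + 1)) →
      phi k n (∏ j ∈ Finset.range a, Xv k (n + 1) (t j)) =
        ∏ j ∈ Finset.range a, Xv k (n + 2) (t j) := by
    intro t h0 h1 h2
    rw [map_prod]
    refine Finset.prod_congr rfl fun j hj => ?_
    have := t_bounds h0 h1 h2 j (Finset.mem_range.1 hj)
    exact phi_Xv k n _ (by omega) (by omega)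
  congr 1
  ext f
  constructor
  · rintro ⟨_, ⟨t, h0, h1, h2, rfl⟩, rfl⟩
    exact ⟨t, h0, h1, h2, key t h0 h1 h2⟩
  · rintro ⟨t, h0, h1, h2, rfl⟩
    exact ⟨_, ⟨t, h0, h1, h2, rfl⟩, key t h0 h1 h2⟩

theorem idealN_eq (k : Type) [Field k] (n a : ℕ) (ha : 2 ≤ a) :
    idealI k n a 1 (n - 1) + idealI k n a 2 n =
      idealI k n a 2 n + Ideal.span {Xv k n 1} * idealI k n (a - 1) 3 (n - 1) := by
  obtain ⟨b, rfl⟩ := Nat.exists_eq_add_of_le' ha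
  rw [Submodule.add_eq_sup, Submodule.add_eq_sup]
  apply le_antisymm
  · refine sup_le ?_ le_sup_left
    conv_lhs => rw [idealI]
    rw [Ideal.span_le]
    rintro _ ⟨t, h0, h1, h2, rfl⟩
    by_cases ht : t 0 = 1
    · refine Ideal.mem_sup_right ?_
      rw [Finset.prod_range_succ', mul_comm _ (Xv k n (t 0)), ht]
      refine Ideal.mul_mem_mul (Ideal.mem_span_singleton_self _) (Ideal.subset_span ?_)
      have := h2 0 (by omega)
      exact ⟨fun j => t (j + 1), by simp only []; omega, h1, fun j hj => h2 (j + 1) (by omega), rfl⟩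
    · exact Ideal.mem_sup_left (Ideal.subset_span ⟨t, by omega, by omega, h2, rfl⟩)
  · refine sup_le le_sup_right ?_
    refine le_trans ?_ le_sup_left
    rw [idealI, idealI, Ideal.span_mul_span', Ideal.span_le]
    rintro _ ⟨x, hx, _, ⟨t, h0, h1, h2, rfl⟩, rfl⟩
    obtain rfl := Set.mem_singleton_iff.1 hx
    refine Ideal.subset_span ⟨fun j => if j = 0 then 1 else t (j - 1), le_rfl, h1, ?_, ?_⟩
    · intro j hj
      cases j with
      | zero => simpa using h0
      | succ j => simpa using h2 j (by omega)
    · exact ((Finset.prod_range_succ' _ _).trans (mul_comm _ _)).symm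

/-- For `d ≥ 3` odd, `d + 1 < m`, `a = (d+1)/2`: the total Betti numbers of
`M = k[Δ(d,m)] = k[x_1,…,x_m]/(I_{a,2,m−1} + x_1x_m·I_{a−1,3,m−2})` over `k[x_1,…,x_m]`
coincide with those of `N = k[Δ(d−1,m−1)] = k[x_1,…,x_{m−1}]/(I_{a,1,m−2} + I_{a,2,m−1})`
over `k[x_1,…,x_{m−1}]`. -/
theorem betti_odd_eq_betti_even (k : Type) [Field k] (d m : ℕ)
    (hd : Odd d) (hd3 : 3 ≤ d) (hm : d + 1 < m) (a : ℕ) (ha : a = (d + 1) / 2)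
    (M : ModuleCat (MvPolynomial (Fin m) k))
    (hM : M = ModuleCat.of (MvPolynomial (Fin m) k)
      (MvPolynomial (Fin m) k ⧸ (idealI k m a 2 (m - 1) +
        Ideal.span {Xv k m 1 * Xv k m m} * idealI k m (a - 1) 3 (m - 2))))
    (N : ModuleCat (MvPolynomial (Fin (m - 1)) k))
    (hN : N = ModuleCat.of (MvPolynomial (Fin (m - 1)) k)
      (MvPolynomial (Fin (m - 1)) k ⧸
        (idealI k (m - 1) a 1 (m - 2) + idealI k (m - 1) a 2 (m - 1)))) :
    ∀ i, betti k m M i = betti k (m - 1) N i := by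
  subst hM hN ha
  obtain ⟨p, rfl⟩ : ∃ p, m = p + 2 := ⟨m - 2, by omega⟩
  intro i
  have h2 : 2 ≤ (d + 1) / 2 := by omega
  have hJ := idealN_eq k (p + 1) _ h2
  have e : (idealI k (p + 1) ((d + 1) / 2) 1 (p + 1 - 1) +
      idealI k (p + 1) ((d + 1) / 2) 2 (p + 1)).map (phi k p).toRingHom =
      idealI k (p + 2) ((d + 1) / 2) 2 (p + 1) +
        Ideal.span {Xv k (p + 2) 1 * Xv k (p + 2) (p + 2)} *
          idealI k (p + 2) ((d + 1) / 2 - 1) 3 p := by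
    rw [hJ, Submodule.add_eq_sup, Submodule.add_eq_sup, Ideal.map_sup, Ideal.map_mul,
      map_idealI k p _ _ _ (by omega) (by omega), map_idealI k p _ _ _ (by omega) (by omega),
      Ideal.map_span, Set.image_singleton, show (phi k p).toRingHom (Xv k (p + 1) 1) = _ from phi_Xv_one k p, Nat.add_sub_cancel]
  have := betti_phi k p (idealI k (p + 1) ((d + 1) / 2) 1 (p + 1 - 1) +
      idealI k (p + 1) ((d + 1) / 2) 2 (p + 1)) i
  rw [e] at this
  exact this
end
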